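/- arXiv:2207.05694 — 3 statements merged into one kernel-verified Lean document; each statement's English description precedes it below -/
import Mathlib

section
/- Let y be a probability vector of dimension d with strictly positive entries sorted in nonincreasing order y_0 ≥ y_1 ≥ … ≥ y_{d−1}. There exist a probability vector x of dimension d with ¬(x ≺ y) and a probability vector c (of some finite dimension) such that x⊗c ≺ y⊗c, if and only if there exist indices l, m with 0 < l < m < d−1 such that y_0 ≠ y_l and y_m ≠ y_{d−1}. -/
/-- The sum of the `k` largest entries of a vector (equivalently, for vectors with
nonnegative entries, the maximum of `∑ i ∈ s, x i` over subsets `s` of cardinality at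
most `k`; this also accounts for padding with zeros). -/
noncomputable def topSum {ι : Type*} [Fintype ι] [DecidableEq ι] (x : ι → ℝ) (k : ℕ) : ℝ :=
  ((Finset.univ : Finset ι).powerset.filter (fun s => s.card ≤ k)).sup'
    ⟨∅, by simp⟩ (fun s => ∑ i ∈ s, x i)

/-- A probability vector: nonnegative entries summing to 1. -/
def IsProbVec {ι : Type*} [Fintype ι] (x : ι → ℝ) : Prop :=
  (∀ i, 0 ≤ x i) ∧ ∑ i, x i = 1

/-- `x ≺ y` (majorization, after padding with zeros to a common dimension): every partial
sum of the `k` largest entries of `x` is at most that of `y`, with equal total sums. -/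
def PMaj {ι κ : Type*} [Fintype ι] [DecidableEq ι] [Fintype κ] [DecidableEq κ]
    (x : ι → ℝ) (y : κ → ℝ) : Prop :=
  (∀ k : ℕ, topSum x k ≤ topSum y k) ∧ (∑ i, x i = ∑ j, y j)

/-- Tensor product of two vectors: `(x ⊗ y)_{(i,j)} = x_i y_j`. -/
def pvTensor {ι κ : Type*} (x : ι → ℝ) (y : κ → ℝ) : ι × κ → ℝ :=
  fun p => x p.1 * y p.2

section TopSum

variable {ι : Type*} [Fintype ι]

lemma sum_le_topSum [DecidableEq ι] (x : ι → ℝ) {k : ℕ} {s : Finset ι} (hs : s.card ≤ k) :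
    ∑ i ∈ s, x i ≤ topSum x k :=
  Finset.le_sup' (fun s => ∑ i ∈ s, x i) (by simpa using hs)

lemma topSum_le [DecidableEq ι] {x : ι → ℝ} {k : ℕ} {B : ℝ}
    (h : ∀ s : Finset ι, s.card ≤ k → ∑ i ∈ s, x i ≤ B) : topSum x k ≤ B :=
  Finset.sup'_le _ _ fun s hs => h s (by simpa using hs)

/-- The total excess of the entries of `x` over the threshold `t`. -/
noncomputable def hinge (x : ι → ℝ) (t : ℝ) : ℝ := ∑ i, max (x i - t) 0

lemma sum_sub_le_hinge (x : ι → ℝ) (t : ℝ) (s : Finset ι) :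
    ∑ i ∈ s, (x i - t) ≤ hinge x t :=
  (Finset.sum_le_sum fun _ _ => le_max_left _ _).trans
    (Finset.sum_le_sum_of_subset_of_nonneg (Finset.subset_univ s) fun _ _ _ => le_max_right _ _)

lemma hinge_nonneg (x : ι → ℝ) (t : ℝ) : 0 ≤ hinge x t :=
  Finset.sum_nonneg fun _ _ => le_max_right _ _

lemma sub_le_hinge (x : ι → ℝ) (t : ℝ) (i : ι) : x i - t ≤ hinge x t := by
  simpa using sum_sub_le_hinge x t {i}

lemma hinge_eq_zero {x : ι → ℝ} {t : ℝ} (h : ∀ i, x i ≤ t) : hinge x t = 0 :=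
  Finset.sum_eq_zero fun i _ => max_eq_right (by linarith [h i])

lemma hinge_eq_sum_sub {x : ι → ℝ} {t : ℝ} (h : ∀ i, t ≤ x i) :
    hinge x t = ∑ i, (x i - t) :=
  Finset.sum_congr rfl fun i _ => max_eq_left (by linarith [h i])

lemma hinge_eq_sum_sub_of_threshold {x : ι → ℝ} {t : ℝ} {s : Finset ι}
    (hs : ∀ i ∈ s, t ≤ x i) (hs' : ∀ i ∉ s, x i ≤ t) : hinge x t = ∑ i ∈ s, (x i - t) := by
  rw [hinge, ← Finset.sum_subset (Finset.subset_univ s)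
    fun i _ hi => max_eq_right (by linarith [hs' i hi])]
  exact Finset.sum_congr rfl fun i hi => max_eq_left (by linarith [hs i hi])

lemma topSum_le_hinge [DecidableEq ι] (x : ι → ℝ) {t : ℝ} (ht : 0 ≤ t) (k : ℕ) :
    topSum x k ≤ k * t + hinge x t := by
  refine topSum_le fun s hs => ?_
  have h := sum_sub_le_hinge x t s
  rw [Finset.sum_sub_distrib, Finset.sum_const, nsmul_eq_mul] at h
  have : (s.card : ℝ) * t ≤ k * t := by gcongr
  linarith

lemma exists_top_finset [DecidableEq ι] (x : ι → ℝ) (k : ℕ) (hk : k ≤ Fintype.card ι) :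
    ∃ s : Finset ι, s.card = k ∧ ∀ i ∈ s, ∀ j ∉ s, x j ≤ x i := by
  induction k with
  | zero => exact ⟨∅, by simp⟩
  | succ k ih =>
    obtain ⟨s, hs, h⟩ := ih (by omega)
    have hne : sᶜ.Nonempty := by
      rw [← Finset.card_pos, Finset.card_compl]; omega
    obtain ⟨a, ha, hmax⟩ := Finset.exists_max_image sᶜ x hne
    rw [Finset.mem_compl] at ha
    refine ⟨insert a s, by rw [Finset.card_insert_of_notMem ha, hs], fun i hi j hj => ?_⟩
    rw [Finset.mem_insert, not_or] at hj
    rcases Finset.mem_insert.1 hi with rfl | hi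
    · exact hmax j (by simpa using hj.2)
    · exact h i hi j hj.2

lemma exists_hinge_le_topSum [DecidableEq ι] {x : ι → ℝ} (hx : ∀ i, 0 ≤ x i) (k : ℕ) :
    ∃ t, 0 ≤ t ∧ k * t + hinge x t ≤ topSum x k := by
  rcases lt_or_ge k (Fintype.card ι) with hk | hk
  · obtain ⟨s, hs, h⟩ := exists_top_finset x k hk.le
    have hne : sᶜ.Nonempty := by
      rw [← Finset.card_pos, Finset.card_compl]; omega
    obtain ⟨a, ha, hmax⟩ := Finset.exists_max_image sᶜ x hne
    rw [Finset.mem_compl] at ha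
    refine ⟨x a, hx a, ?_⟩
    rw [hinge_eq_sum_sub_of_threshold (fun i hi => h i hi a ha)
      (fun i hi => hmax i (by simpa using hi)), Finset.sum_sub_distrib, Finset.sum_const,
      nsmul_eq_mul, hs]
    linarith [sum_le_topSum x hs.le]
  · refine ⟨0, le_rfl, ?_⟩
    have := sum_le_topSum x (s := Finset.univ) hk
    rw [hinge_eq_sum_sub hx]
    simpa using this

lemma PMaj.of_hinge_le [DecidableEq ι] {κ : Type*} [Fintype κ] [DecidableEq κ] {x : ι → ℝ} {y : κ → ℝ}
    (hy : ∀ j, 0 ≤ y j) (hsum : ∑ i, x i = ∑ j, y j) (h : ∀ t, hinge x t ≤ hinge y t) :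
    PMaj x y := by
  refine ⟨fun k => ?_, hsum⟩
  obtain ⟨t, ht, hk⟩ := exists_hinge_le_topSum hy k
  linarith [topSum_le_hinge x ht k, h t]

lemma sum_pvTensor {κ : Type*} [Fintype κ] (x : ι → ℝ) (c : κ → ℝ) :
    ∑ p, pvTensor x c p = (∑ i, x i) * ∑ j, c j := by
  simp only [pvTensor, Finset.sum_mul_sum, Fintype.sum_prod_type]

lemma hinge_pvTensor {κ : Type*} [Fintype κ] (x : ι → ℝ) {c : κ → ℝ}
    (hc : ∀ j, 0 < c j) (t : ℝ) :
    hinge (pvTensor x c) t = ∑ j, c j * hinge x (t / c j) := by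
  simp only [hinge, pvTensor, Fintype.sum_prod_type_right, Finset.mul_sum]
  refine Finset.sum_congr rfl fun j _ => Finset.sum_congr rfl fun i _ => ?_
  rw [mul_max_of_nonneg _ _ (hc j).le, mul_zero, mul_sub, mul_div_cancel₀ _ (hc j).ne', mul_comm]

end TopSum

/-- If `g` is at least `η` on intervals below and above the window `(a₂, b₁)`, nonnegative outside
that window and only slightly negative inside, then the sum of `g` along a long and fine enough
geometric progression is nonnegative. -/
lemma geometric_sum_nonneg {g : ℝ → ℝ} {a₁ a₂ b₁ b₂ r η δ : ℝ} {N : ℕ}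
    (hr : 1 ≤ r) (ha₂ : 0 ≤ a₂) (ha : r * a₁ ≤ a₂) (hb : r * b₁ ≤ b₂) (hN : b₁ ≤ a₂ * r ^ N)
    (hlow : ∀ t ≤ a₂, 0 ≤ g t) (hhigh : ∀ t, b₁ ≤ t → 0 ≤ g t)
    (hlowη : ∀ t, a₁ ≤ t → t ≤ a₂ → η ≤ g t) (hhighη : ∀ t, b₁ ≤ t → t ≤ b₂ → η ≤ g t)
    (hδ : ∀ t, -δ ≤ g t) (hδ₀ : 0 ≤ δ) (hη : (N + 1) * (r ^ N * δ) ≤ η) (T : ℝ) :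
    0 ≤ ∑ j ∈ Finset.range (N + 1), r ^ j * g (T / r ^ j) := by
  have hr0 : 0 < r := by linarith
  have hη0 : 0 ≤ η := le_trans (by positivity) hη
  by_cases hwin : ∃ j ∈ Finset.range (N + 1), a₂ < T / r ^ j ∧ T / r ^ j < b₁
  swap
  · push Not at hwin
    refine Finset.sum_nonneg fun j hj => mul_nonneg (by positivity) ?_
    rcases le_or_gt (T / r ^ j) a₂ with h | h
    · exact hlow _ h
    · exact hhigh _ (hwin j hj h)
  obtain ⟨j₀, hj₀, hwa, hwb⟩ := hwin
  rw [Finset.mem_range] at hj₀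
  have step : ∀ j, T / r ^ j = r * (T / r ^ (j + 1)) := fun j => by
    rw [pow_succ]; field_simp
  obtain ⟨j₁, hj₁, hg⟩ : ∃ j ∈ Finset.range (N + 1), η ≤ g (T / r ^ j) := by
    rcases le_or_gt b₁ T with hT | hT
    · classical
      have hex : ∃ j, T / r ^ j < b₁ := ⟨j₀, hwb⟩
      have hle : Nat.find hex ≤ j₀ := Nat.find_min' hex hwb
      have hspec := Nat.find_spec hex
      rcases hn : Nat.find hex with _ | n
      · rw [hn, pow_zero, div_one] at hspec; linarith
      · rw [hn] at hspec
        have hmin : b₁ ≤ T / r ^ n := not_lt.1 (Nat.find_min hex (by omega))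
        refine ⟨n, Finset.mem_range.2 (by omega), hhighη _ hmin ?_⟩
        rw [step]
        nlinarith
    · classical
      have hlast : T / r ^ N ≤ a₂ := by
        rw [div_le_iff₀ (by positivity)]; linarith
      have hex : ∃ j, T / r ^ j ≤ a₂ := ⟨N, hlast⟩
      have hle : Nat.find hex ≤ N := Nat.find_min' hex hlast
      have hspec := Nat.find_spec hex
      rcases hn : Nat.find hex with _ | n
      · rw [hn, pow_zero, div_one] at hspec
        have hT₀ : 0 ≤ T := by
          by_contra hneg
          have : T / r ^ j₀ ≤ 0 := div_nonpos_of_nonpos_of_nonneg (by linarith) (by positivity)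
          linarith
        linarith [div_le_self hT₀ (one_le_pow₀ hr (n := j₀))]
      · rw [hn] at hspec
        have hmin : a₂ < T / r ^ n := not_le.1 (Nat.find_min hex (by omega))
        rw [step] at hmin
        exact ⟨n + 1, Finset.mem_range.2 (by omega), hlowη _ (by nlinarith) hspec⟩
  have hneg : ∀ j ∈ Finset.range (N + 1), -(r ^ N * δ) ≤ r ^ j * g (T / r ^ j) := by
    intro j hj
    have h1 : r ^ j ≤ r ^ N := pow_le_pow_right₀ hr (by simpa [Nat.lt_succ_iff] using hj)
    have h2 : r ^ j * -δ ≤ r ^ j * g (T / r ^ j) := by gcongr; exact hδ _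
    nlinarith
  have hpos : η ≤ r ^ j₁ * g (T / r ^ j₁) :=
    hg.trans (le_mul_of_one_le_left (hη0.trans hg) (one_le_pow₀ hr))
  rw [← Finset.add_sum_erase _ _ hj₁]
  have hrest : ∑ j ∈ (Finset.range (N + 1)).erase j₁, -(r ^ N * δ) ≤
      ∑ j ∈ (Finset.range (N + 1)).erase j₁, r ^ j * g (T / r ^ j) :=
    Finset.sum_le_sum fun j hj => hneg j (Finset.mem_of_mem_erase hj)
  rw [Finset.sum_const, Finset.card_erase_of_mem hj₁, Finset.card_range, nsmul_eq_mul] at hrest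
  have : 0 ≤ r ^ N * δ := by positivity
  push_cast [Nat.add_sub_cancel] at hrest
  nlinarith

lemma card_mul_max_le {ι : Type*} (y : ι → ℝ) (s : Finset ι) (u : ℝ) {e v : ℝ} (he : 0 ≤ e)
    (hv : s.card * v ≤ ∑ i ∈ s, y i + e) :
    s.card * max (v - u) 0 ≤ ∑ i ∈ s, max (y i - u) 0 + e := by
  have h0 : 0 ≤ ∑ i ∈ s, max (y i - u) 0 := Finset.sum_nonneg fun _ _ => le_max_right _ _
  have h1 : ∑ i ∈ s, (y i - u) ≤ ∑ i ∈ s, max (y i - u) 0 :=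
    Finset.sum_le_sum fun _ _ => le_max_left _ _
  rw [Finset.sum_sub_distrib, Finset.sum_const, nsmul_eq_mul] at h1
  rw [mul_max_of_nonneg _ _ (Nat.cast_nonneg _), mul_zero]
  exact max_le (by linarith) (by linarith)

section Catalysis

variable {ι κ : Type*} [Fintype ι] [DecidableEq ι] [Fintype κ] [DecidableEq κ]

lemma le_of_pvTensor_pmaj {x y : ι → ℝ} {c : κ → ℝ} {M : ℝ} (hc : IsProbVec c) (hM : 0 ≤ M)
    (hy : ∀ i, y i ≤ M) (h : PMaj (pvTensor x c) (pvTensor y c)) (i : ι) : x i ≤ M := by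
  have hex : ∃ j ∈ Finset.univ, (0 : ℝ) < c j :=
    Finset.exists_lt_of_sum_lt (f := fun _ => (0 : ℝ)) (by simp [hc.2])
  obtain ⟨j, -, hj⟩ := hex
  obtain ⟨j₀, -, hmax⟩ := Finset.exists_max_image Finset.univ c ⟨j, Finset.mem_univ j⟩
  have hj₀ : 0 < c j₀ := hj.trans_le (hmax j (Finset.mem_univ j))
  have hlow : x i * c j₀ ≤ topSum (pvTensor x c) 1 := by
    simpa [pvTensor] using sum_le_topSum (pvTensor x c) (s := {(i, j₀)}) (k := 1) (by simp)
  have hup : topSum (pvTensor y c) 1 ≤ M * c j₀ := by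
    refine topSum_le fun s hs => ?_
    rcases s.eq_empty_or_nonempty with rfl | hne
    · simp only [Finset.sum_empty]; positivity
    · obtain ⟨p, rfl⟩ := Finset.card_eq_one.1 (le_antisymm hs hne.card_pos)
      rw [Finset.sum_singleton]
      exact mul_le_mul (hy _) (hmax _ (Finset.mem_univ _)) (hc.1 _) hM
  exact le_of_mul_le_mul_right (hlow.trans ((h.1 1).trans hup)) hj₀

lemma ge_of_pvTensor_pmaj {x y : ι → ℝ} {c : κ → ℝ} {m : ℝ} (hc : IsProbVec c) (hm : 0 ≤ m)
    (hx : ∑ i, x i = 1) (hy : IsProbVec y) (hym : ∀ i, m ≤ y i)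
    (h : PMaj (pvTensor x c) (pvTensor y c)) (i : ι) : m ≤ x i := by
  have hex : ∃ j ∈ Finset.univ, (0 : ℝ) < c j :=
    Finset.exists_lt_of_sum_lt (f := fun _ => (0 : ℝ)) (by simp [hc.2])
  obtain ⟨j, -, hj⟩ := hex
  set J := Finset.univ.filter fun j => 0 < c j with hJ
  obtain ⟨j₀, hj₀J, hmin⟩ := Finset.exists_min_image J c ⟨j, by simp [hJ, hj]⟩
  have hj₀ : 0 < c j₀ := by simpa [hJ] using hj₀J
  have hsumJ : ∑ j ∈ J, c j = 1 := by
    rw [← hc.2]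
    refine Finset.sum_subset (Finset.subset_univ J) fun j _ hj => ?_
    exact le_antisymm (by simpa [hJ] using hj) (hc.1 j)
  set S := (Finset.univ : Finset ι) ×ˢ J with hS
  have hmem : (i, j₀) ∈ S := by simp [hS, hj₀J]
  have hcard : 0 < S.card := Finset.card_pos.2 ⟨_, hmem⟩
  have hsumS : ∑ p ∈ S, pvTensor x c p = 1 := by
    simp only [hS, pvTensor, Finset.sum_product, ← Finset.sum_mul_sum, hx, hsumJ, one_mul]
  have hlow : 1 - x i * c j₀ ≤ topSum (pvTensor x c) (S.card - 1) := by
    have h1 := sum_le_topSum (pvTensor x c) (Finset.card_erase_of_mem hmem).le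
    rw [Finset.sum_erase_eq_sub hmem, hsumS] at h1
    exact h1
  have hup : topSum (pvTensor y c) (S.card - 1) ≤ 1 - m * c j₀ := by
    refine topSum_le fun s hs => ?_
    obtain ⟨p, hpS, hps⟩ := Finset.exists_mem_notMem_of_card_lt_card (s := s) (t := S) (by omega)
    have hpJ : p.2 ∈ J := (Finset.mem_product.1 hpS).2
    have h1 : ∑ q ∈ s, pvTensor y c q ≤ ∑ q ∈ Finset.univ.erase p, pvTensor y c q :=
      Finset.sum_le_sum_of_subset_of_nonneg
        (fun q hq => Finset.mem_erase.2 ⟨fun hqp => hps (hqp ▸ hq), Finset.mem_univ q⟩)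
        fun q _ _ => mul_nonneg (hy.1 _) (hc.1 _)
    rw [Finset.sum_erase_eq_sub (Finset.mem_univ p), sum_pvTensor, hy.2, hc.2, one_mul] at h1
    have h2 : m * c j₀ ≤ pvTensor y c p :=
      mul_le_mul (hym _) (hmin _ hpJ) hj₀.le (hm.trans (hym _))
    linarith
  have := hlow.trans ((h.1 _).trans hup)
  exact le_of_mul_le_mul_right (by linarith) hj₀

/-- The vector obtained from `y` by averaging over `A` and over its complement and then moving
a mass `δ` from the complement to `A`. -/
noncomputable def blockAverage (y : ι → ℝ) (A : Finset ι) (δ : ℝ) (i : ι) : ℝ :=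
  if i ∈ A then (∑ j ∈ A, y j + δ) / A.card else (∑ j ∈ Aᶜ, y j - δ) / Aᶜ.card

lemma sum_comp_blockAverage (y : ι → ℝ) (A : Finset ι) (δ : ℝ) (φ : ℝ → ℝ) :
    ∑ i, φ (blockAverage y A δ i) =
      A.card * φ ((∑ j ∈ A, y j + δ) / A.card) +
        Aᶜ.card * φ ((∑ j ∈ Aᶜ, y j - δ) / Aᶜ.card) := by
  rw [← Finset.sum_add_sum_compl A]
  congr 1
  · rw [← nsmul_eq_mul]
    exact Finset.sum_eq_card_nsmul fun i hi => by rw [blockAverage, if_pos hi]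
  · rw [← nsmul_eq_mul]
    exact Finset.sum_eq_card_nsmul fun i hi => by
      rw [blockAverage, if_neg (Finset.mem_compl.1 hi)]

lemma sum_blockAverage (y : ι → ℝ) {A : Finset ι} (hA : A.Nonempty) (hA' : Aᶜ.Nonempty) (δ : ℝ) :
    ∑ i, blockAverage y A δ i = ∑ i, y i := by
  have h1 : (A.card : ℝ) ≠ 0 := by exact_mod_cast hA.card_pos.ne'
  have h2 : (Aᶜ.card : ℝ) ≠ 0 := by exact_mod_cast hA'.card_pos.ne'
  have h := sum_comp_blockAverage y A δ id
  simp only [id] at h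
  rw [h, mul_div_cancel₀ _ h1, mul_div_cancel₀ _ h2, ← Finset.sum_add_sum_compl A y]
  ring

lemma hinge_blockAverage_le (y : ι → ℝ) {A : Finset ι} (hA : A.Nonempty) (hA' : Aᶜ.Nonempty)
    {δ : ℝ} (hδ : 0 ≤ δ) (u : ℝ) : hinge (blockAverage y A δ) u ≤ hinge y u + δ := by
  have h1 : (A.card : ℝ) ≠ 0 := by exact_mod_cast hA.card_pos.ne'
  have h2 : (Aᶜ.card : ℝ) ≠ 0 := by exact_mod_cast hA'.card_pos.ne'
  rw [hinge, sum_comp_blockAverage y A δ fun v => max (v - u) 0, hinge,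
    ← Finset.sum_add_sum_compl A]
  have h3 := card_mul_max_le y A u hδ (v := (∑ j ∈ A, y j + δ) / A.card)
    (mul_div_cancel₀ _ h1).le
  have h4 := card_mul_max_le y Aᶜ u le_rfl (v := (∑ j ∈ Aᶜ, y j - δ) / Aᶜ.card)
    (by rw [mul_div_cancel₀ _ h2]; linarith)
  linarith

lemma not_pmaj_blockAverage {y : ι → ℝ} {A : Finset ι} (hA : A.Nonempty) {t : ℝ} (ht : 0 ≤ t)
    (hAt : ∀ i ∈ A, t ≤ y i) (hAt' : ∀ i ∉ A, y i ≤ t) {δ : ℝ} (hδ : 0 < δ) :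
    ¬ PMaj (blockAverage y A δ) y := by
  intro h
  have h1 : (A.card : ℝ) ≠ 0 := by exact_mod_cast hA.card_pos.ne'
  have hlow := sum_le_topSum (blockAverage y A δ) (s := A) le_rfl
  rw [Finset.sum_eq_card_nsmul (fun i hi => by rw [blockAverage, if_pos hi]), nsmul_eq_mul,
    mul_div_cancel₀ _ h1] at hlow
  have hup := topSum_le_hinge y ht A.card
  rw [hinge_eq_sum_sub_of_threshold hAt hAt', Finset.sum_sub_distrib, Finset.sum_const,
    nsmul_eq_mul] at hup
  linarith [h.1 A.card]

/-- If the values of `x` lie in a compact subinterval of the range of `y` and the hinge function of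
`x` exceeds that of `y` by little, then a geometric sequence is a catalyst. -/
lemma pvTensor_geometric_pmaj {x y : ι → ℝ} (hy : ∀ i, 0 ≤ y i) (hsum : ∑ i, x i = ∑ i, y i)
    {a₁ a₂ b₁ b₂ r η δ : ℝ} {N : ℕ} {i₀ i₁ : ι}
    (hr : 1 ≤ r) (ha₂ : 0 ≤ a₂) (ha : r * a₁ ≤ a₂) (hb : r * b₁ ≤ b₂) (hN : b₁ ≤ a₂ * r ^ N)
    (hxa : ∀ i, a₂ ≤ x i) (hxb : ∀ i, x i ≤ b₁) (hδ : ∀ u, hinge x u ≤ hinge y u + δ)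
    (hδ₀ : 0 ≤ δ) (hηa : η ≤ a₁ - y i₁) (hηb : η ≤ y i₀ - b₂)
    (hη : (N + 1) * (r ^ N * δ) ≤ η) :
    ∃ c : Fin (N + 1) → ℝ, IsProbVec c ∧ PMaj (pvTensor x c) (pvTensor y c) := by
  have hr0 : 0 < r := by linarith
  set S := ∑ j : Fin (N + 1), r ^ (j : ℕ) with hSdef
  have hS : 0 < S := Finset.sum_pos (fun _ _ => by positivity) Finset.univ_nonempty
  have hc : ∀ j : Fin (N + 1), 0 < r ^ (j : ℕ) / S := fun j => by positivity
  refine ⟨fun j => r ^ (j : ℕ) / S, ⟨fun j => (hc j).le, ?_⟩, ?_⟩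
  · rw [← Finset.sum_div, div_self hS.ne']
  refine PMaj.of_hinge_le (fun p => mul_nonneg (hy _) (hc _).le) ?_ fun t => ?_
  · rw [sum_pvTensor, sum_pvTensor, hsum]
  have hlow : ∀ u ≤ a₂, hinge x u = ∑ i, (y i - u) := fun u hu => by
    rw [hinge_eq_sum_sub fun i => hu.trans (hxa i), Finset.sum_sub_distrib, hsum,
      ← Finset.sum_sub_distrib]
  have hhigh : ∀ u, b₁ ≤ u → hinge x u = 0 := fun u hu =>
    hinge_eq_zero fun i => (hxb i).trans hu
  have key := geometric_sum_nonneg (g := fun u => hinge y u - hinge x u) hr ha₂ ha hb hN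
    (fun u hu => by
      rw [hlow u hu]
      exact sub_nonneg.2 (sum_sub_le_hinge y u Finset.univ))
    (fun u hu => by
      rw [hhigh u hu, sub_zero]
      exact hinge_nonneg y u)
    (η := η) (fun u hu hu' => by
      have h1 := sum_sub_le_hinge y u (Finset.univ.erase i₁)
      rw [Finset.sum_erase_eq_sub (Finset.mem_univ i₁), ← hlow u hu'] at h1
      linarith)
    (fun u hu hu' => by
      rw [hhigh u hu]
      linarith [sub_le_hinge y u i₀])
    (fun u => by linarith [hδ u]) hδ₀ hη (t * S)
  rw [Finset.sum_range fun j => r ^ j * (hinge y (t * S / r ^ j) - hinge x (t * S / r ^ j))] at key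
  rw [hinge_pvTensor x hc, hinge_pvTensor y hc, ← sub_nonneg, ← Finset.sum_sub_distrib]
  have heq : ∀ j : Fin (N + 1), r ^ (j : ℕ) / S * hinge y (t / (r ^ (j : ℕ) / S)) -
      r ^ (j : ℕ) / S * hinge x (t / (r ^ (j : ℕ) / S)) =
      r ^ (j : ℕ) * (hinge y (t * S / r ^ (j : ℕ)) - hinge x (t * S / r ^ (j : ℕ))) / S := by
    intro j
    rw [div_div_eq_mul_div]
    ring
  rw [Finset.sum_congr rfl fun j _ => heq j, ← Finset.sum_div]
  exact div_nonneg key hS.le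

/-- Nontrivial catalysis is possible for `y` if its index set splits into a block of large and a
block of small entries such that the averages over the blocks lie strictly inside the range
of `y`. -/
lemma exists_nontrivial_catalysis {y : ι → ℝ} (hy : IsProbVec y) (hyp : ∀ i, 0 < y i)
    {A : Finset ι} (hA : A.Nonempty) (hA' : Aᶜ.Nonempty) {t : ℝ}
    (hAt : ∀ i ∈ A, t ≤ y i) (hAt' : ∀ i ∉ A, y i ≤ t) {i₀ i₁ : ι}
    (h₀ : ∑ i ∈ A, y i < A.card * y i₀) (h₁ : Aᶜ.card * y i₁ < ∑ i ∈ Aᶜ, y i) :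
    ∃ x : ι → ℝ, IsProbVec x ∧ ¬ PMaj x y ∧
      ∃ (k : ℕ) (c : Fin k → ℝ), IsProbVec c ∧ PMaj (pvTensor x c) (pvTensor y c) := by
  have hα : (1 : ℝ) ≤ A.card := by exact_mod_cast hA.card_pos
  have hβ : (1 : ℝ) ≤ Aᶜ.card := by exact_mod_cast hA'.card_pos
  have hα0 : (0 : ℝ) < A.card := by linarith
  have hβ0 : (0 : ℝ) < Aᶜ.card := by linarith
  set p := (∑ i ∈ A, y i) / A.card with hp
  set q := (∑ i ∈ Aᶜ, y i) / Aᶜ.card with hq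
  have hp₀ : p < y i₀ := by rw [hp, div_lt_iff₀ hα0]; linarith
  have hq₁ : y i₁ < q := by rw [hq, lt_div_iff₀ hβ0]; linarith
  have htp : t ≤ p := by
    rw [hp, le_div_iff₀ hα0, mul_comm, ← nsmul_eq_mul]
    exact Finset.card_nsmul_le_sum _ _ _ hAt
  have hqt : q ≤ t := by
    rw [hq, div_le_iff₀ hβ0, mul_comm, ← nsmul_eq_mul]
    exact Finset.sum_le_card_nsmul _ _ _ fun i hi => hAt' i (Finset.mem_compl.1 hi)
  obtain ⟨a₂, ha₂, ha₂q⟩ := exists_between hq₁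
  obtain ⟨a₁, ha₁, ha₁₂⟩ := exists_between ha₂
  obtain ⟨b₁, hb₁, hb₁'⟩ := exists_between hp₀
  obtain ⟨b₂, hb₁₂, hb₂⟩ := exists_between hb₁'
  have hy₁ := hyp i₁
  have ha₁0 : 0 < a₁ := by linarith
  have ha₂0 : 0 < a₂ := by linarith
  have hb₁0 : 0 < b₁ := by linarith
  obtain ⟨r, hr1, hr⟩ := exists_between
    (lt_min ((one_lt_div ha₁0).2 ha₁₂) ((one_lt_div hb₁0).2 hb₁₂))
  have hra : r * a₁ ≤ a₂ := (le_div_iff₀ ha₁0).1 (hr.le.trans (min_le_left _ _))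
  have hrb : r * b₁ ≤ b₂ := (le_div_iff₀ hb₁0).1 (hr.le.trans (min_le_right _ _))
  obtain ⟨N, hN⟩ := pow_unbounded_of_one_lt (b₁ / a₂) hr1
  have hN' : b₁ ≤ a₂ * r ^ N := by
    rw [div_lt_iff₀ ha₂0] at hN; linarith
  have hC : 0 < (N + 1 : ℝ) * r ^ N := by positivity
  have hη : 0 < min (a₁ - y i₁) (y i₀ - b₂) := lt_min (by linarith) (by linarith)
  obtain ⟨δ, hδ0, hδ⟩ := exists_between
    (lt_min (div_pos hη hC) (lt_min (sub_pos.2 hb₁) (sub_pos.2 ha₂q)))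
  have hδη : (N + 1) * (r ^ N * δ) ≤ min (a₁ - y i₁) (y i₀ - b₂) := by
    have := (le_div_iff₀ hC).1 (hδ.le.trans (min_le_left _ _))
    linarith
  have hδb : δ ≤ b₁ - p := hδ.le.trans ((min_le_right _ _).trans (min_le_left _ _))
  have hδa : δ ≤ q - a₂ := hδ.le.trans ((min_le_right _ _).trans (min_le_right _ _))
  have hδα : 0 ≤ δ / A.card ∧ δ / A.card ≤ δ := ⟨by positivity, div_le_self hδ0.le hα⟩
  have hδβ : 0 ≤ δ / Aᶜ.card ∧ δ / Aᶜ.card ≤ δ := ⟨by positivity, div_le_self hδ0.le hβ⟩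
  have hbounds : ∀ i, a₂ ≤ blockAverage y A δ i ∧ blockAverage y A δ i ≤ b₁ := by
    intro i
    rw [blockAverage]
    split_ifs
    · rw [add_div, ← hp]; constructor <;> linarith
    · rw [sub_div, ← hq]; constructor <;> linarith
  have hsum := sum_blockAverage y hA hA' δ
  obtain ⟨c, hc, hmaj⟩ := pvTensor_geometric_pmaj hy.1 hsum hr1.le ha₂0.le hra hrb hN'
    (fun i => (hbounds i).1) (fun i => (hbounds i).2) (hinge_blockAverage_le y hA hA' hδ0.le)
    hδ0.le (min_le_left _ _) (min_le_right _ _) hδη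
  exact ⟨blockAverage y A δ, ⟨fun i => ha₂0.le.trans (hbounds i).1, hsum.trans hy.2⟩,
    not_pmaj_blockAverage hA (by linarith) hAt hAt' hδ0, N + 1, c, hc, hmaj⟩

end Catalysis

/-- If every initial segment of `y` is constantly `M` or is followed only by entries equal to `m`,
then `y` majorizes every vector with the same sum and entries between `m` and `M`. -/
lemma pmaj_of_mem_Icc {d : ℕ} {x y : Fin d → ℝ} {m M : ℝ} (hm : 0 ≤ m)
    (hM : 0 ≤ M) (hsum : ∑ i, x i = ∑ i, y i) (hxm : ∀ i, m ≤ x i) (hxM : ∀ i, x i ≤ M)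
    (h : ∀ k : ℕ, (∀ i : Fin d, (i : ℕ) < k → y i = M) ∨ ∀ i : Fin d, k ≤ (i : ℕ) → y i = m) :
    PMaj x y := by
  refine ⟨fun k => topSum_le fun s hs => ?_, hsum⟩
  set T : Finset (Fin d) := Finset.univ.filter fun i => (i : ℕ) < k with hT
  have hTcard : T.card = min d k := by
    rw [hT, Fin.card_filter_val_lt]
  have hTk : T.card ≤ k := by omega
  have hsT : s.card ≤ T.card := by
    rw [hTcard]
    exact le_min (by simpa using s.card_le_univ) hs
  refine le_trans ?_ (sum_le_topSum y hTk)
  have hsT' : (s.card : ℝ) ≤ T.card := by exact_mod_cast hsT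
  rcases h k with h | h
  · rw [Finset.sum_eq_card_nsmul fun i hi => h i (by simpa [hT] using hi), nsmul_eq_mul]
    have := Finset.sum_le_card_nsmul s x M fun i _ => hxM i
    rw [nsmul_eq_mul] at this
    nlinarith
  · have h1 := Finset.sum_add_sum_compl s x
    have h2 := Finset.sum_add_sum_compl T y
    rw [Finset.sum_eq_card_nsmul (s := Tᶜ) fun i hi => h i (by simpa [hT] using hi),
      nsmul_eq_mul] at h2
    have h3 := Finset.card_nsmul_le_sum sᶜ x m fun i _ => hxm i
    rw [nsmul_eq_mul] at h3
    have h4 : (Tᶜ.card : ℝ) ≤ sᶜ.card := by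
      rw [Finset.card_compl, Finset.card_compl]
      exact_mod_cast Nat.sub_le_sub_left hsT _
    nlinarith

/-- Daftuar–Klimesh characterization of target states admitting nontrivial catalysis:
for a strictly positive, nonincreasingly sorted probability vector `y` of dimension `d`,
there exist `x` with `¬(x ≺ y)` and a catalyst `c` with `x ⊗ c ≺ y ⊗ c` iff there are
indices `0 < l < m < d - 1` with `y₀ ≠ y_l` and `y_m ≠ y_{d-1}`. -/
theorem nontrivial_catalysis_iff {d : ℕ} (hd : 0 < d) (y : Fin d → ℝ)
    (hy : IsProbVec y) (hyp : ∀ i, 0 < y i) (hya : Antitone y) :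
    (∃ x : Fin d → ℝ, IsProbVec x ∧ ¬ PMaj x y ∧
        ∃ (k : ℕ) (c : Fin k → ℝ), IsProbVec c ∧ PMaj (pvTensor x c) (pvTensor y c)) ↔
      (∃ l m : Fin d, 0 < (l : ℕ) ∧ (l : ℕ) < (m : ℕ) ∧ (m : ℕ) < d - 1 ∧
        y ⟨0, hd⟩ ≠ y l ∧ y m ≠ y ⟨d - 1, Nat.sub_lt hd Nat.one_pos⟩) := by
  have h0 : ∀ i, y i ≤ y ⟨0, hd⟩ := fun i => hya (Fin.mk_le_of_le_val (Nat.zero_le _))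
  have hlast : ∀ i, y ⟨d - 1, Nat.sub_lt hd Nat.one_pos⟩ ≤ y i := fun i =>
    hya (Fin.le_def.2 (Nat.le_sub_one_of_lt i.2))
  constructor
  · rintro ⟨x, hx, hnot, k, c, hc, hmaj⟩
    by_contra hcon
    refine hnot (pmaj_of_mem_Icc (m := y ⟨d - 1, Nat.sub_lt hd Nat.one_pos⟩) (M := y ⟨0, hd⟩)
      (hyp _).le (hyp _).le (hx.2.trans hy.2.symm)
      (ge_of_pvTensor_pmaj hc (hyp _).le hx.2 hy hlast hmaj)
      (le_of_pvTensor_pmaj hc (hyp _).le h0 hmaj) fun n => ?_)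
    by_contra! hn
    obtain ⟨⟨l, hln, hl⟩, m, hmn, hm⟩ := hn
    refine hcon ⟨l, m, Nat.pos_of_ne_zero fun h => hl ?_, by omega,
      lt_of_le_of_ne (Nat.le_sub_one_of_lt m.2) fun h => hm ?_, hl.symm, hm⟩
    · congr 1; exact Fin.ext h
    · congr 1; exact Fin.ext h
  · rintro ⟨l, m, hl, hlm, hm, hyl, hym⟩
    have hl' : l ∈ Finset.Iic l := Finset.mem_Iic.2 le_rfl
    have hm' : m ∈ (Finset.Iic l)ᶜ := by simpa using hlm
    refine exists_nontrivial_catalysis hy hyp (A := Finset.Iic l) (t := y l)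
      (i₀ := ⟨0, hd⟩) (i₁ := ⟨d - 1, Nat.sub_lt hd Nat.one_pos⟩) ⟨l, hl'⟩ ⟨m, hm'⟩
      (fun i hi => hya (Finset.mem_Iic.1 hi)) (fun i hi => hya ?_) ?_ ?_
    · exact (not_le.1 fun h => hi (Finset.mem_Iic.2 h)).le
    · rw [← nsmul_eq_mul, ← Finset.sum_const]
      exact Finset.sum_lt_sum (fun i _ => h0 i) ⟨l, hl', lt_of_le_of_ne (h0 l) hyl.symm⟩
    · rw [← nsmul_eq_mul, ← Finset.sum_const]
      exact Finset.sum_lt_sum (fun i _ => hlast i) ⟨m, hm', lt_of_le_of_ne (hlast m) hym.symm⟩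
end

section
/- Let x, y be probability vectors of dimension d, sorted in nonincreasing order, with strictly positive entries and ¬(x ≺ y), and let t be a probability vector of dimension r with strictly positive entries such that x⊗t ≺ y⊗t. Then log₂C_d(x) > log₂C_d(y) and r ≥ 1 + ((d−1)/d)·(log₂C_{d−1}(y) − log₂C_{d−1}(x))/(log₂C_d(x) − log₂C_d(y)), where for a probability vector v of dimension d, C_k(v) = (e_k(v)/e_k(u_d))^{1/k}, e_k is the k-th elementary symmetric polynomial in the entries, and u_d is the uniform probability vector (1/d,…,1/d). -/
/-- The `k`-th elementary symmetric polynomial of the entries of a vector. -/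
def esymFn {ι : Type*} [Fintype ι] [DecidableEq ι] (k : ℕ) (v : ι → ℝ) : ℝ :=
  ∑ s ∈ Finset.powersetCard k (Finset.univ : Finset ι), ∏ i ∈ s, v i

/-- The generalized `k`-th concurrence `C_k(v) = (e_k(v) / e_k(u_d))^(1/k)`,
where `u_d` is the uniform probability vector. -/
noncomputable def concFn {ι : Type*} [Fintype ι] [DecidableEq ι] (k : ℕ) (v : ι → ℝ) : ℝ :=
  (esymFn k v / esymFn k (fun _ : ι => 1 / (Fintype.card ι : ℝ))) ^ ((1 : ℝ) / k)

/-- Abel summation: pairing a monotone sequence with one whose partial sums are nonpositive. -/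
lemma mul_sum_le_sum_mul_of_partial_sums_nonpos :
    ∀ {n : ℕ} (g δ : Fin (n + 1) → ℝ), Monotone g →
      (∀ k ≤ n + 1, ∑ i : Fin (n + 1), (if (i : ℕ) < k then δ i else 0) ≤ 0) →
      g (Fin.last n) * ∑ i, δ i ≤ ∑ i, g i * δ i
  | 0, g, δ, _, _ => by simp
  | n + 1, g, δ, hg, hδ => by
    have hpartial : ∀ k ≤ n + 1,
        ∑ i : Fin (n + 1), (if (i : ℕ) < k then δ i.castSucc else 0) ≤ 0 := by
      intro k hk
      have h := hδ k (by omega)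
      rw [Fin.sum_univ_castSucc] at h
      simpa [Nat.not_lt.mpr hk] using h
    have ih := mul_sum_le_sum_mul_of_partial_sums_nonpos (fun i => g i.castSucc)
      (fun i => δ i.castSucc) (fun i j hij => hg (by simpa using hij)) hpartial
    have hsum : ∑ i : Fin (n + 1), δ i.castSucc ≤ 0 := by
      simpa only [Fin.is_lt, if_true] using hpartial (n + 1) le_rfl
    have hle : g (Fin.last n).castSucc ≤ g (Fin.last (n + 1)) := hg (Fin.le_last _)
    rw [Fin.sum_univ_castSucc, Fin.sum_univ_castSucc (f := fun i => g i * δ i)]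
    nlinarith [mul_le_mul_of_nonpos_right hle hsum]

/-- `v` is dominated by `w` in partial sums, with equal totals. For antitone vectors this is
majorization. -/
def PartialSumsLE {n : ℕ} (v w : Fin n → ℝ) : Prop :=
  (∀ k, ∑ i : Fin n, (if (i : ℕ) < k then v i else 0) ≤
    ∑ i : Fin n, (if (i : ℕ) < k then w i else 0)) ∧ ∑ i, v i = ∑ i, w i

lemma PartialSumsLE.sum_mul_sub_nonneg {n : ℕ} {v w : Fin n → ℝ} (h : PartialSumsLE v w)
    {g : Fin n → ℝ} (hg : Monotone g) : 0 ≤ ∑ i, g i * (v i - w i) := by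
  cases n with
  | zero => simp
  | succ n =>
    have key := mul_sum_le_sum_mul_of_partial_sums_nonpos g (fun i => v i - w i) hg (by
      intro k _
      have hk := h.1 k
      rw [← sub_nonpos, ← Finset.sum_sub_distrib] at hk
      refine le_trans (le_of_eq (Finset.sum_congr rfl fun i _ => ?_)) hk
      split_ifs <;> simp)
    rw [Finset.sum_sub_distrib, h.2, sub_self, mul_zero] at key
    exact key

lemma log_sub_log_ge {a b : ℝ} (ha : 0 < a) (hb : 0 < b) :
    a⁻¹ * (a - b) ≤ Real.log a - Real.log b := by
  have h := Real.log_le_sub_one_of_pos (div_pos hb ha)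
  rw [Real.log_div hb.ne' ha.ne'] at h
  have : a⁻¹ * (a - b) = 1 - b / a := by field_simp
  linarith

lemma log_sub_log_gt {a b : ℝ} (ha : 0 < a) (hb : 0 < b) (hab : a ≠ b) :
    a⁻¹ * (a - b) < Real.log a - Real.log b := by
  have h := Real.log_lt_sub_one_of_pos (div_pos hb ha)
    (fun h => hab ((div_eq_one_iff_eq ha.ne').mp h).symm)
  rw [Real.log_div hb.ne' ha.ne'] at h
  have : a⁻¹ * (a - b) = 1 - b / a := by field_simp
  linarith

/-- Strict Schur-concavity of `∑ log` on antitone positive vectors. -/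
lemma PartialSumsLE.sum_log_lt {n : ℕ} {v w : Fin n → ℝ} (h : PartialSumsLE v w)
    (hv : Antitone v) (hvp : ∀ i, 0 < v i) (hwp : ∀ i, 0 < w i) (hne : v ≠ w) :
    ∑ i, Real.log (w i) < ∑ i, Real.log (v i) := by
  have h0 := h.sum_mul_sub_nonneg (g := fun i => (v i)⁻¹)
    (fun i j hij => inv_anti₀ (hvp j) (hv hij))
  obtain ⟨i, hi⟩ := Function.ne_iff.mp hne
  have hlt : ∑ i, (v i)⁻¹ * (v i - w i) < ∑ i, (Real.log (v i) - Real.log (w i)) :=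
    Finset.sum_lt_sum (fun j _ => log_sub_log_ge (hvp j) (hwp j))
      ⟨i, Finset.mem_univ i, log_sub_log_gt (hvp i) (hwp i) hi⟩
  rw [Finset.sum_sub_distrib] at hlt
  linarith

lemma monotone_inv_sub_inv_sq_div {n : ℕ} {z : Fin n → ℝ} (hz : Antitone z)
    (hzp : ∀ i, 0 < z i) :
    Monotone fun i => (z i)⁻¹ - ((z i)⁻¹) ^ 2 / ∑ j, (z j)⁻¹ := by
  intro i j hij
  rcases eq_or_ne i j with rfl | hne
  · exact le_rfl
  have hip := inv_pos.mpr (hzp i)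
  have hinv : (z i)⁻¹ ≤ (z j)⁻¹ := inv_anti₀ (hzp j) (hz hij)
  have hpair : (z i)⁻¹ + (z j)⁻¹ ≤ ∑ l, (z l)⁻¹ := by
    rw [← Finset.sum_pair (f := fun l => (z l)⁻¹) hne]
    exact Finset.sum_le_sum_of_subset_of_nonneg (Finset.subset_univ _)
      fun l _ _ => (inv_pos.mpr (hzp l)).le
  have hA : 0 < ∑ l, (z l)⁻¹ := by linarith
  dsimp only
  rw [← sub_nonneg]
  have : (z j)⁻¹ - ((z j)⁻¹) ^ 2 / ∑ l, (z l)⁻¹ - ((z i)⁻¹ - ((z i)⁻¹) ^ 2 / ∑ l, (z l)⁻¹) =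
      ((z j)⁻¹ - (z i)⁻¹) * (∑ l, (z l)⁻¹ - ((z i)⁻¹ + (z j)⁻¹)) / ∑ l, (z l)⁻¹ := by
    generalize ∑ l, (z l)⁻¹ = A at hA
    generalize (z i)⁻¹ = a
    generalize (z j)⁻¹ = b
    field_simp
    ring
  rw [this]
  exact div_nonneg (mul_nonneg (by linarith) (by linarith)) hA.le

/-- Schur-concavity of `log (∏ vᵢ * ∑ vᵢ⁻¹)`, the logarithm of the elementary symmetric
polynomial of degree one less than the dimension. -/
lemma PartialSumsLE.sum_log_add_log_sum_inv_le {n : ℕ} {v w : Fin n → ℝ}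
    (h : PartialSumsLE v w) (hv : Antitone v) (hw : Antitone w)
    (hvp : ∀ i, 0 < v i) (hwp : ∀ i, 0 < w i) :
    ∑ i, Real.log (w i) + Real.log (∑ i, (w i)⁻¹) ≤
      ∑ i, Real.log (v i) + Real.log (∑ i, (v i)⁻¹) := by
  rcases Nat.eq_zero_or_pos n with rfl | hn
  · simp
  have : Nonempty (Fin n) := ⟨⟨0, hn⟩⟩
  let z : ℝ → Fin n → ℝ := fun s i => w i + s * (v i - w i)
  have hz_eq : ∀ s i, z s i = (1 - s) * w i + s * v i := fun s i => by simp only [z]; ring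
  have hzp : ∀ s ∈ Set.Icc (0 : ℝ) 1, ∀ i, 0 < z s i := by
    intro s hs i
    rw [hz_eq]
    rcases hs.1.eq_or_lt with rfl | h0
    · simpa using hwp i
    · exact add_pos_of_nonneg_of_pos (mul_nonneg (by linarith [hs.2]) (hwp i).le)
        (mul_pos h0 (hvp i))
  have hza : ∀ s ∈ Set.Icc (0 : ℝ) 1, Antitone (z s) := by
    intro s hs i j hij
    rw [hz_eq, hz_eq]
    exact add_le_add (mul_le_mul_of_nonneg_left (hw hij) (by linarith [hs.2]))
      (mul_le_mul_of_nonneg_left (hv hij) hs.1)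
  have hder : ∀ s ∈ Set.Icc (0 : ℝ) 1,
      HasDerivAt (fun s => ∑ i, Real.log (z s i) + Real.log (∑ i, (z s i)⁻¹))
        (∑ i, ((z s i)⁻¹ - ((z s i)⁻¹) ^ 2 / ∑ j, (z s j)⁻¹) * (v i - w i)) s := by
    intro s hs
    have hzi : ∀ i, HasDerivAt (fun s => z s i) (v i - w i) s := fun i => by
      simpa only [one_mul, id_eq] using
        ((hasDerivAt_id s).mul_const (v i - w i)).const_add (w i)
    have hA : 0 < ∑ i, (z s i)⁻¹ :=
      Finset.sum_pos (fun i _ => inv_pos.mpr (hzp s hs i)) Finset.univ_nonempty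
    have h1 := HasDerivAt.fun_sum (u := Finset.univ)
      fun i _ => (hzi i).log (hzp s hs i).ne'
    have h2 := (HasDerivAt.fun_sum (u := Finset.univ)
      fun i _ => (hzi i).fun_inv (hzp s hs i).ne').log hA.ne'
    refine (h1.add h2).congr_deriv ?_
    rw [Finset.sum_div, ← Finset.sum_add_distrib]
    refine Finset.sum_congr rfl fun i _ => ?_
    have := (hzp s hs i).ne'
    generalize ∑ j, (z s j)⁻¹ = A at hA
    field_simp
    ring
  have hmono := monotoneOn_of_deriv_nonneg (convex_Icc (0 : ℝ) 1)
    (fun s hs => (hder s hs).continuousAt.continuousWithinAt)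
    (fun s hs => (hder s (interior_subset hs)).differentiableAt.differentiableWithinAt)
    (fun s hs => by
      have hs' := interior_subset hs
      rw [(hder s hs').deriv]
      exact h.sum_mul_sub_nonneg (monotone_inv_sub_inv_sq_div (hza s hs') (hzp s hs')))
  have h01 := hmono (Set.left_mem_Icc.mpr zero_le_one) (Set.right_mem_Icc.mpr zero_le_one)
    zero_le_one
  simpa [z] using h01

lemma exists_equiv_antitone {ι : Type*} [Fintype ι] {n : ℕ} (hn : Fintype.card ι = n) (v : ι → ℝ) :
    ∃ e : Fin n ≃ ι, Antitone (v ∘ e) := by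
  let e₀ := (Fintype.equivFinOfCardEq hn).symm
  refine ⟨(Tuple.sort fun i => -v (e₀ i)).trans e₀, fun i j hij => ?_⟩
  have := Tuple.monotone_sort (fun i => -v (e₀ i)) hij
  simpa using this

section Rearrangement

variable {ι : Type*} [Fintype ι] [DecidableEq ι]

lemma partial_sum_le_topSum {n : ℕ} (e : Fin n ≃ ι) (v : ι → ℝ) (k : ℕ) :
    ∑ i : Fin n, (if (i : ℕ) < k then v (e i) else 0) ≤ topSum v k := by
  rw [← Finset.sum_filter]
  refine (Finset.sum_map _ e.toEmbedding v).symm.trans_le ?_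
  refine Finset.le_sup' (fun s => ∑ i ∈ s, v i) ?_
  simp only [Finset.mem_filter, Finset.mem_powerset, Finset.subset_univ, true_and,
    Finset.card_map]
  calc _ ≤ (Finset.range k).card := Finset.card_le_card_of_injOn (fun i : Fin n => (i : ℕ))
        (fun i hi => by simpa using hi) (fun i _ j _ hij => Fin.ext hij)
    _ = k := Finset.card_range k

lemma sum_le_partial_sum {n : ℕ} {u : Fin n → ℝ} (hu : Antitone u) (hup : ∀ i, 0 ≤ u i)
    (s : Finset (Fin n)) {k : ℕ} (hs : s.card ≤ k) :
    ∑ i ∈ s, u i ≤ ∑ i : Fin n, (if (i : ℕ) < k then u i else 0) := by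
  rcases lt_or_ge k n with hk | hk
  · set c := u ⟨k, hk⟩
    have hterm : ∀ i : Fin n, (if i ∈ s then u i - c else 0) ≤
        if (i : ℕ) < k then u i - c else 0 := by
      intro i
      by_cases hik : (i : ℕ) < k
      · have : c ≤ u i := hu (Fin.le_def.mpr hik.le)
        split_ifs <;> simp [this]
      · have : u i ≤ c := hu (Fin.le_def.mpr (not_lt.mp hik))
        split_ifs <;> simp [this]
    have hsum := Finset.sum_le_sum fun i (_ : i ∈ Finset.univ) => hterm i
    have hcard : (Finset.univ.filter fun i : Fin n => (i : ℕ) < k).card = k := by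
      rw [Fin.card_filter_val_lt, min_eq_right hk.le]
    rw [← Finset.sum_filter, ← Finset.sum_filter, Finset.sum_sub_distrib,
      Finset.sum_sub_distrib, Finset.sum_const, Finset.sum_const, hcard,
      Finset.filter_univ_mem, nsmul_eq_mul, nsmul_eq_mul] at hsum
    rw [← Finset.sum_filter]
    have : (s.card : ℝ) * c ≤ k * c :=
      mul_le_mul_of_nonneg_right (by exact_mod_cast hs) (hup _)
    linarith
  · have : ∀ i : Fin n, (i : ℕ) < k := fun i => i.2.trans_le hk
    simpa [this] using
      Finset.sum_le_sum_of_subset_of_nonneg (Finset.subset_univ s) fun i _ _ => hup i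

lemma topSum_le_partial_sum {n : ℕ} (e : Fin n ≃ ι) {w : ι → ℝ} (hw : Antitone (w ∘ e))
    (hwp : ∀ i, 0 ≤ w i) (k : ℕ) :
    topSum w k ≤ ∑ i : Fin n, (if (i : ℕ) < k then w (e i) else 0) := by
  refine Finset.sup'_le _ _ fun s hs => ?_
  have := sum_le_partial_sum hw (fun i => hwp (e i)) (s.map e.symm.toEmbedding) (k := k)
    (by simpa using hs)
  simpa using this

lemma PMaj.partialSumsLE {n : ℕ} {v w : ι → ℝ} (h : PMaj v w) (hwp : ∀ i, 0 ≤ w i)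
    (e f : Fin n ≃ ι) (hf : Antitone (w ∘ f)) : PartialSumsLE (v ∘ e) (w ∘ f) := by
  refine ⟨fun k => (partial_sum_le_topSum e v k).trans
    ((h.1 k).trans (topSum_le_partial_sum f hf hwp k)), ?_⟩
  simpa only [Function.comp_apply, e.sum_comp, f.sum_comp] using h.2

/-- Strict Schur-concavity of `∑ log`. -/
lemma PMaj.sum_log_lt_or_perm {v w : ι → ℝ} (h : PMaj v w) (hvp : ∀ i, 0 < v i)
    (hwp : ∀ i, 0 < w i) :
    ∑ i, Real.log (w i) < ∑ i, Real.log (v i) ∨ ∃ σ : Equiv.Perm ι, v = w ∘ σ := by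
  obtain ⟨e, he⟩ := exists_equiv_antitone rfl v
  obtain ⟨f, hf⟩ := exists_equiv_antitone rfl w
  by_cases hne : v ∘ e = w ∘ f
  · refine Or.inr ⟨e.symm.trans f, funext fun i => ?_⟩
    simpa using congrFun hne (e.symm i)
  · left
    have := (h.partialSumsLE (fun i => (hwp i).le) e f hf).sum_log_lt he
      (fun i => hvp _) (fun i => hwp _) hne
    simpa only [Function.comp_apply, e.sum_comp fun i => Real.log (v i),
      f.sum_comp fun i => Real.log (w i)] using this

lemma PMaj.sum_log_add_log_sum_inv_le {v w : ι → ℝ} (h : PMaj v w) (hvp : ∀ i, 0 < v i)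
    (hwp : ∀ i, 0 < w i) :
    ∑ i, Real.log (w i) + Real.log (∑ i, (w i)⁻¹) ≤
      ∑ i, Real.log (v i) + Real.log (∑ i, (v i)⁻¹) := by
  obtain ⟨e, he⟩ := exists_equiv_antitone rfl v
  obtain ⟨f, hf⟩ := exists_equiv_antitone rfl w
  have := (h.partialSumsLE (fun i => (hwp i).le) e f hf).sum_log_add_log_sum_inv_le he hf
    (fun i => hvp _) (fun i => hwp _)
  simpa only [Function.comp_apply, e.sum_comp fun i => Real.log (v i),
    f.sum_comp fun i => Real.log (w i), e.sum_comp fun i => (v i)⁻¹,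
    f.sum_comp fun i => (w i)⁻¹] using this

end Rearrangement

/-- At the first index where the antitone vectors `x` and `y` differ, `x` is not smaller,
provided that `x ⊗ t` and `y ⊗ t` agree up to a permutation. -/
lemma le_of_pvTensor_perm {d r : ℕ} {x y : Fin d → ℝ} {t : Fin r → ℝ} (hxa : Antitone x)
    (hyp : ∀ i, 0 < y i) (htp : ∀ j, 0 < t j) (hr : 0 < r)
    {σ : Equiv.Perm (Fin d × Fin r)} (hσ : pvTensor x t = pvTensor y t ∘ σ)
    (i : Fin d) (heq : ∀ l < i, x l = y l) : y i ≤ x i := by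
  by_contra! hlt
  have : Nonempty (Fin r) := ⟨⟨0, hr⟩⟩
  obtain ⟨j, hj⟩ := Finite.exists_max t
  have hcount : ∑ p, (if y i * t j ≤ pvTensor x t p then (1 : ℕ) else 0) =
      ∑ p, if y i * t j ≤ pvTensor y t p then (1 : ℕ) else 0 := by
    rw [hσ]
    exact Equiv.sum_comp σ fun p => if y i * t j ≤ pvTensor y t p then (1 : ℕ) else 0
  have hsmall : ∀ p : Fin d × Fin r, i ≤ p.1 → pvTensor x t p < y i * t j := fun p hp =>
    calc x p.1 * t p.2 ≤ x i * t p.2 := mul_le_mul_of_nonneg_right (hxa hp) (htp _).le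
      _ < y i * t p.2 := mul_lt_mul_of_pos_right hlt (htp _)
      _ ≤ y i * t j := mul_le_mul_of_nonneg_left (hj _) (hyp i).le
  refine hcount.not_lt (Finset.sum_lt_sum (fun p _ => ?_) ⟨(i, j), Finset.mem_univ _, ?_⟩)
  · rcases lt_or_ge p.1 i with hp | hp
    · have hxy : pvTensor x t p = pvTensor y t p := by rw [pvTensor, pvTensor, heq p.1 hp]
      rw [hxy]
    · simp [(hsmall p hp).not_ge]
  · rw [if_neg (hsmall (i, j) le_rfl).not_ge]
    simp [pvTensor]

lemma eq_of_pvTensor_perm {d r : ℕ} {x y : Fin d → ℝ} {t : Fin r → ℝ} (hxa : Antitone x)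
    (hya : Antitone y) (hxp : ∀ i, 0 < x i) (hyp : ∀ i, 0 < y i) (htp : ∀ j, 0 < t j)
    (hr : 0 < r) {σ : Equiv.Perm (Fin d × Fin r)}
    (hσ : pvTensor x t = pvTensor y t ∘ σ) : x = y := by
  have hσ' : pvTensor y t = pvTensor x t ∘ σ.symm := by
    funext p
    simp [hσ]
  funext i
  induction i using WellFoundedLT.induction with
  | ind i ih =>
    exact le_antisymm
      (le_of_pvTensor_perm hya hxp htp hr hσ' i fun l hl => (ih l hl).symm)
      (le_of_pvTensor_perm hxa hyp htp hr hσ i ih)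

lemma sum_log_pvTensor {d r : ℕ} {x : Fin d → ℝ} {t : Fin r → ℝ} (hxp : ∀ i, 0 < x i)
    (htp : ∀ j, 0 < t j) :
    ∑ p, Real.log (pvTensor x t p) =
      r * ∑ i, Real.log (x i) + d * ∑ j, Real.log (t j) := by
  rw [Fintype.sum_prod_type]
  simp [pvTensor, Real.log_mul (hxp _).ne' (htp _).ne', Finset.sum_add_distrib,
    Finset.mul_sum]

lemma sum_inv_pvTensor {d r : ℕ} (x : Fin d → ℝ) (t : Fin r → ℝ) :
    ∑ p, (pvTensor x t p)⁻¹ = (∑ i, (x i)⁻¹) * ∑ j, (t j)⁻¹ := by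
  rw [Fintype.sum_prod_type, Finset.sum_mul_sum]
  simp [pvTensor, mul_comm]

lemma esymFn_pos {d k : ℕ} (hk : k ≤ d) {v : Fin d → ℝ} (hv : ∀ i, 0 < v i) :
    0 < esymFn k v :=
  Finset.sum_pos (fun _ _ => Finset.prod_pos fun i _ => hv i)
    (Finset.powersetCard_nonempty.mpr (by simpa using hk))

lemma log_esymFn_card {d : ℕ} {v : Fin d → ℝ} (hv : ∀ i, 0 < v i) :
    Real.log (esymFn d v) = ∑ i, Real.log (v i) := by
  have : Finset.powersetCard d (Finset.univ : Finset (Fin d)) = {Finset.univ} := by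
    simpa using Finset.powersetCard_self (Finset.univ : Finset (Fin d))
  rw [esymFn, this, Finset.sum_singleton, Real.log_prod fun i _ => (hv i).ne']

lemma esymFn_pred {d : ℕ} (hd : 0 < d) {v : Fin d → ℝ} (hv : ∀ i, 0 < v i) :
    esymFn (d - 1) v = (∏ i, v i) * ∑ i, (v i)⁻¹ := by
  rw [Finset.mul_sum, esymFn]
  symm
  refine Finset.sum_bij (fun i _ => Finset.univ.erase i) (fun i _ => ?_) (fun i _ j _ h => ?_)
    (fun s hs => ?_) (fun i _ => ?_)
  · simp [Finset.mem_powersetCard, Finset.card_erase_of_mem]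
  · exact (Finset.erase_inj Finset.univ (Finset.mem_univ i)).mp h
  · have hcard : sᶜ.card = 1 := by
      rw [Finset.card_compl, (Finset.mem_powersetCard.mp hs).2, Fintype.card_fin]
      omega
    obtain ⟨i, hi⟩ := Finset.card_eq_one.mp hcard
    refine ⟨i, Finset.mem_univ i, ?_⟩
    rw [← compl_compl s, hi, Finset.compl_singleton]
  · rw [← Finset.mul_prod_erase _ v (Finset.mem_univ i)]
    have := (hv i).ne'
    field_simp

lemma log_esymFn_pred {d : ℕ} (hd : 0 < d) {v : Fin d → ℝ} (hv : ∀ i, 0 < v i) :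
    Real.log (esymFn (d - 1) v) = ∑ i, Real.log (v i) + Real.log (∑ i, (v i)⁻¹) := by
  have : Nonempty (Fin d) := ⟨⟨0, hd⟩⟩
  rw [esymFn_pred hd hv, Real.log_mul (Finset.prod_pos fun i _ => hv i).ne'
    (Finset.sum_pos (fun i _ => inv_pos.mpr (hv i)) Finset.univ_nonempty).ne',
    Real.log_prod fun i _ => (hv i).ne']

lemma logb_concFn_sub {d k : ℕ} (hd : 0 < d) (hk : k ≤ d) {v w : Fin d → ℝ}
    (hv : ∀ i, 0 < v i) (hw : ∀ i, 0 < w i) :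
    Real.logb 2 (concFn k v) - Real.logb 2 (concFn k w) =
      (Real.log (esymFn k v) - Real.log (esymFn k w)) / (k * Real.log 2) := by
  have hu : 0 < esymFn k (fun _ : Fin d => 1 / (Fintype.card (Fin d) : ℝ)) :=
    esymFn_pos hk fun _ => by simpa using hd
  have hv' := esymFn_pos hk hv
  have hw' := esymFn_pos hk hw
  rw [concFn, concFn, Real.logb, Real.logb, Real.log_rpow (div_pos hv' hu),
    Real.log_rpow (div_pos hw' hu), Real.log_div hv'.ne' hu.ne', Real.log_div hw'.ne' hu.ne']
  rcases Nat.eq_zero_or_pos k with rfl | hkp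
  · simp
  · have : Real.log 2 ≠ 0 := (Real.log_pos one_lt_two).ne'
    field_simp
    ring

/-- Sanders–Gour lower bound on the number of nonzero Schmidt coefficients of a catalyst,
via generalized concurrences. -/
theorem sanders_gour_bound {d r : ℕ} (x y : Fin d → ℝ) (t : Fin r → ℝ)
    (hx : IsProbVec x) (hy : IsProbVec y) (hxa : Antitone x) (hya : Antitone y)
    (hxp : ∀ i, 0 < x i) (hyp : ∀ i, 0 < y i)
    (hnm : ¬ PMaj x y)
    (ht : IsProbVec t) (htp : ∀ i, 0 < t i)
    (hcat : PMaj (pvTensor x t) (pvTensor y t)) :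
    Real.logb 2 (concFn d y) < Real.logb 2 (concFn d x) ∧
      1 + ((d : ℝ) - 1) / d *
          ((Real.logb 2 (concFn (d - 1) y) - Real.logb 2 (concFn (d - 1) x)) /
            (Real.logb 2 (concFn d x) - Real.logb 2 (concFn d y))) ≤ (r : ℝ) := by
  have hr : 0 < r := Nat.pos_of_ne_zero fun h => by subst h; simpa using ht.2
  have hd : 2 ≤ d := by
    by_contra! hlt
    interval_cases d
    · simpa using hx.2
    · refine hnm ?_
      have hxy : x = y := by
        funext i
        have h1 := hx.2
        have h2 := hy.2
        simp only [Fin.sum_univ_one] at h1 h2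
        rw [Subsingleton.elim i 0, h1, h2]
      rw [hxy]
      exact ⟨fun _ => le_rfl, rfl⟩
  have : Nonempty (Fin d) := ⟨⟨0, by omega⟩⟩
  have : Nonempty (Fin r) := ⟨⟨0, hr⟩⟩
  have hxt : ∀ p, 0 < pvTensor x t p := fun p => mul_pos (hxp _) (htp _)
  have hyt : ∀ p, 0 < pvTensor y t p := fun p => mul_pos (hyp _) (htp _)
  have hlog2 : 0 < Real.log 2 := Real.log_pos one_lt_two
  have hlog : ∑ i, Real.log (y i) < ∑ i, Real.log (x i) := by
    rcases hcat.sum_log_lt_or_perm hxt hyt with hlt | ⟨σ, hσ⟩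
    · rw [sum_log_pvTensor hxp htp, sum_log_pvTensor hyp htp, add_lt_add_iff_right] at hlt
      exact lt_of_mul_lt_mul_left hlt (Nat.cast_nonneg r)
    · refine absurd ?_ hnm
      rw [eq_of_pvTensor_perm hxa hya hxp hyp htp hr hσ]
      exact ⟨fun _ => le_rfl, rfl⟩
  have hinv : ∀ {n : ℕ} [Nonempty (Fin n)] {v : Fin n → ℝ}, (∀ i, 0 < v i) →
      ∑ i, (v i)⁻¹ ≠ 0 := fun hv =>
    (Finset.sum_pos (fun i _ => inv_pos.mpr (hv i)) Finset.univ_nonempty).ne'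
  have hpred := hcat.sum_log_add_log_sum_inv_le hxt hyt
  rw [sum_log_pvTensor hxp htp, sum_log_pvTensor hyp htp, sum_inv_pvTensor,
    sum_inv_pvTensor, Real.log_mul (hinv hxp) (hinv htp),
    Real.log_mul (hinv hyp) (hinv htp)] at hpred
  have hd0 : (0 : ℝ) < d := by exact_mod_cast (by omega : 0 < d)
  have hd1 : (0 : ℝ) < (d : ℝ) - 1 := by
    have : (2 : ℝ) ≤ d := by exact_mod_cast hd
    linarith
  have hcd := logb_concFn_sub (by omega) le_rfl hxp hyp
  have hcd1 := logb_concFn_sub (by omega) (Nat.sub_le d 1) hyp hxp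
  rw [log_esymFn_card hxp, log_esymFn_card hyp] at hcd
  rw [log_esymFn_pred (by omega) hxp, log_esymFn_pred (by omega) hyp,
    Nat.cast_sub (by omega : 1 ≤ d), Nat.cast_one] at hcd1
  refine ⟨?_, ?_⟩
  · rw [← sub_pos, hcd]
    exact div_pos (sub_pos.mpr hlog) (mul_pos hd0 hlog2)
  · rw [hcd, hcd1]
    generalize ∑ i, Real.log (x i) = X at *
    generalize ∑ i, Real.log (y i) = Y at *
    generalize Real.log (∑ i, (x i)⁻¹) = A at *
    generalize Real.log (∑ i, (y i)⁻¹) = B at *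
    have hXY : 0 < X - Y := sub_pos.mpr hlog
    have hsimp : ((d : ℝ) - 1) / d *
        ((Y + B - (X + A)) / (((d : ℝ) - 1) * Real.log 2) / ((X - Y) / (d * Real.log 2))) =
        (Y + B - (X + A)) / (X - Y) := by
      field_simp
    rw [hsimp, ← le_sub_iff_add_le', div_le_iff₀ hXY]
    linarith
end

section
/- Let p, q be probability vectors of dimension d with strictly positive entries whose nonincreasing rearrangements are not equal. Then the following are equivalent: (i) H(p) < H(q), where H(v) = −Σ_i v_i ln v_i is the Shannon entropy; (ii) there exist an integer N ≥ 1, probability vectors r_1,…,r_N of dimensions k_1,…,k_N, a probability vector t on the product index set {1..k_1}×…×{1..k_N} whose j-th marginal equals r_j for every j, and a doubly stochastic matrix B of size d·k_1⋯k_N such that B(p⊗r_1⊗…⊗r_N) = q⊗t. -/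
/-- The Shannon entropy `H(v) = -∑ i, v i * ln (v i)`. -/
noncomputable def shEnt {ι : Type*} [Fintype ι] (v : ι → ℝ) : ℝ :=
  - ∑ i, v i * Real.log (v i)

open Matrix Finset

/-- `y` is the image of `x` under some doubly stochastic matrix. -/
def BistochReach {ι : Type*} [Fintype ι] [DecidableEq ι] (x y : ι → ℝ) : Prop :=
  ∃ B ∈ doublyStochastic ℝ ι, B *ᵥ x = y

namespace BistochReach

variable {ι κ : Type*} [Fintype ι] [DecidableEq ι] [Fintype κ] [DecidableEq κ]

theorem refl (x : ι → ℝ) : BistochReach x x :=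
  ⟨1, one_mem _, one_mulVec x⟩

theorem trans {x y z : ι → ℝ} (hxy : BistochReach x y) (hyz : BistochReach y z) :
    BistochReach x z := by
  obtain ⟨A, hA, rfl⟩ := hxy
  obtain ⟨B, hB, rfl⟩ := hyz
  exact ⟨B * A, mul_mem hB hA, (mulVec_mulVec _ _ _).symm⟩

theorem comp_equiv {x y : ι → ℝ} (h : BistochReach x y) (e₁ e₂ : κ ≃ ι) :
    BistochReach (x ∘ e₁) (y ∘ e₂) := by
  obtain ⟨B, hB, rfl⟩ := h
  refine ⟨B.reindex e₂.symm e₁.symm, reindex_mem_doublyStochastic hB, ?_⟩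
  ext i
  simp [mulVec, dotProduct, ← e₁.sum_comp]

/-- Acting with a doubly stochastic matrix that depends on a classical register. -/
theorem of_blocks {x y : ι × κ → ℝ}
    (h : ∀ k, BistochReach (fun i => x (i, k)) (fun i => y (i, k))) : BistochReach x y := by
  choose B hB hxy using h
  simp only [mem_doublyStochastic_iff_sum] at hB
  refine ⟨blockDiagonal B, mem_doublyStochastic_iff_sum.2 ⟨?_, ?_, ?_⟩, ?_⟩
  · rintro ⟨i, k⟩ ⟨j, l⟩
    rw [blockDiagonal_apply']
    split_ifs
    exacts [(hB k).1 i j, le_rfl]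
  · rintro ⟨i, k⟩
    simp [Fintype.sum_prod_type, blockDiagonal_apply', (hB k).2.1]
  · rintro ⟨j, l⟩
    simp [Fintype.sum_prod_type, blockDiagonal_apply', (hB l).2.2]
  · ext ⟨i, k⟩
    rw [← congrFun (hxy k) i]
    simp [mulVec, dotProduct, Fintype.sum_prod_type, blockDiagonal_apply', ite_mul]

theorem smul {x y : ι → ℝ} (h : BistochReach x y) (c : ℝ) : BistochReach (c • x) (c • y) := by
  obtain ⟨B, hB, rfl⟩ := h
  exact ⟨B, hB, mulVec_smul _ _ _⟩

/-- If a set of cardinality `a` carries all but little of the mass of `x`, then `x` can be mapped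
close to any probability vector whose entries are at most `1 / a`. -/
theorem exists_near {x w : ι → ℝ} (hx : IsProbVec x) (hw : IsProbVec w) (A : Finset ι)
    (hA : ∀ i, A.card * w i ≤ 1) :
    ∃ y, BistochReach x y ∧ IsProbVec y ∧ ∑ i, |y i - w i| ≤ 2 * (1 - ∑ i ∈ A, x i) := by
  set b : ℝ := Fintype.card ι - A.card with hb
  set c : ι → ℝ := fun i => (1 - A.card * w i) / b with hc
  have hb0 : 0 ≤ b := sub_nonneg.2 (by exact_mod_cast A.card_le_univ)
  have hc0 : ∀ i, 0 ≤ c i := fun i => div_nonneg (sub_nonneg.2 (hA i)) hb0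
  have hsum : ∑ i, (1 - A.card * w i) = b := by
    simp [sum_sub_distrib, ← mul_sum, hw.2, hb]
  have hbc : ∀ i, b * c i = 1 - A.card * w i := by
    intro i
    rcases eq_or_ne b 0 with h | h
    · rw [h] at hsum
      rw [(sum_eq_zero_iff_of_nonneg fun i _ => sub_nonneg.2 (hA i)).1 hsum i (mem_univ i), h,
        zero_mul]
    · exact mul_div_cancel₀ _ h
  have hcs : ∑ i, c i = b / b := by rw [hc, ← sum_div, hsum]
  have hcompl : (Aᶜ.card : ℝ) = b := by rw [card_compl, Nat.cast_sub A.card_le_univ]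
  have hxA : ∑ i ∈ Aᶜ, x i = 1 - ∑ i ∈ A, x i := by
    rw [← hx.2, ← sum_add_sum_compl A x]; ring
  have hxA0 : 0 ≤ 1 - ∑ i ∈ A, x i := hxA ▸ sum_nonneg fun i _ => hx.1 i
  have hsplit : ∀ f g : ι → ℝ, ∑ j, (if j ∈ A then f j else g j)
      = ∑ j ∈ A, f j + ∑ j ∈ Aᶜ, g j := fun f g => by
    rw [← sum_add_sum_compl A]
    congr 1
    · exact sum_congr rfl fun j hj => if_pos hj
    · exact sum_congr rfl fun j hj => if_neg (mem_compl.1 hj)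
  set B : Matrix ι ι ℝ := Matrix.of fun i j => if j ∈ A then w i else c i with hB
  have hBds : B ∈ doublyStochastic ℝ ι := by
    refine mem_doublyStochastic_iff_sum.2 ⟨fun i j => ?_, fun i => ?_, fun j => ?_⟩
    · simp only [hB, of_apply]
      split_ifs
      exacts [hw.1 i, hc0 i]
    · simp only [hB, of_apply]
      rw [hsplit, sum_const, sum_const, nsmul_eq_mul, nsmul_eq_mul, hcompl, hbc]
      ring
    · simp only [hB, of_apply]
      split_ifs with hj
      · exact hw.2
      · rw [hcs, div_self]
        rw [← hcompl, Nat.cast_ne_zero, card_ne_zero]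
        exact ⟨j, mem_compl.2 hj⟩
  refine ⟨B *ᵥ x, ⟨B, hBds, rfl⟩, ⟨fun i => ?_, ?_⟩, ?_⟩
  · exact sum_nonneg fun j _ => mul_nonneg (hBds.1 i j) (hx.1 j)
  · rw [sum_mulVec_of_mem_doublyStochastic hBds, hx.2]
  · have hy : ∀ i, (B *ᵥ x) i - w i = (1 - ∑ j ∈ A, x j) * (c i - w i) := by
      intro i
      simp only [mulVec, dotProduct, hB, of_apply, ite_mul]
      rw [hsplit, ← mul_sum, ← mul_sum, hxA]
      ring
    simp only [hy, abs_mul, abs_of_nonneg hxA0]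
    rw [← mul_sum, mul_comm]
    refine mul_le_mul_of_nonneg_right ?_ hxA0
    calc ∑ i, |c i - w i| ≤ ∑ i, (c i + w i) := sum_le_sum fun i _ =>
          abs_sub_le_iff.2 ⟨by linarith [hw.1 i], by linarith [hc0 i]⟩
      _ = b / b + 1 := by rw [sum_add_distrib, hcs, hw.2]
      _ ≤ 2 := by linarith [div_self_le_one b]

end BistochReach

/-- Second moment identity for i.i.d. sums. -/
theorem sum_prod_mul_sum_sq {α : Type*} [Fintype α] {p : α → ℝ} (hp : ∑ a, p a = 1)
    {g : α → ℝ} (hg : ∑ a, p a * g a = 0) (n : ℕ) :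
    ∑ x : Fin n → α, (∏ i, p (x i)) * (∑ i, g (x i)) ^ 2 = n * ∑ a, p a * g a ^ 2 := by
  induction n with
  | zero => simp
  | succ n ih =>
    have hone : ∑ x : Fin n → α, ∏ i, p (x i) = 1 := by
      rw [← Fintype.sum_pow, hp, one_pow]
    rw [← (Fin.consEquiv fun _ => α).sum_comp, Fintype.sum_prod_type]
    have key : ∀ a : α, ∑ y : Fin n → α, (∏ i, p (Fin.consEquiv (fun _ => α) (a, y) i)) *
        (∑ i, g (Fin.consEquiv (fun _ => α) (a, y) i)) ^ 2 =
        p a * g a ^ 2 + 2 * (p a * g a) * ∑ y : Fin n → α, (∏ i, p (y i)) * ∑ i, g (y i)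
          + p a * ∑ y : Fin n → α, (∏ i, p (y i)) * (∑ i, g (y i)) ^ 2 := by
      intro a
      rw [← mul_one (p a * g a ^ 2), ← hone, mul_sum, mul_sum, mul_sum, ← sum_add_distrib,
        ← sum_add_distrib]
      refine sum_congr rfl fun y _ => ?_
      simp only [Fin.consEquiv_apply, Fin.prod_univ_succ, Fin.sum_univ_succ, Fin.cons_zero,
        Fin.cons_succ]
      ring
    simp only [key, sum_add_distrib, ← sum_mul, ← mul_sum, hg, hp, ih]
    push_cast
    ring

/-- The weak law of large numbers for a finite alphabet, in product form. -/
theorem sum_prod_filter_le {α : Type*} [Fintype α] {p : α → ℝ} (hp : IsProbVec p)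
    {g : α → ℝ} (hg : ∑ a, p a * g a = 0) {n : ℕ} (hn : 0 < n) {δ : ℝ} (hδ : 0 < δ) :
    ∑ x ∈ univ.filter (fun x : Fin n → α => n * δ < |∑ i, g (x i)|), ∏ i, p (x i)
      ≤ (∑ a, p a * g a ^ 2) / (n * δ ^ 2) := by
  have hn' : (0 : ℝ) < n := by exact_mod_cast hn
  have h0 : ∀ x : Fin n → α, 0 ≤ ∏ i, p (x i) := fun x => prod_nonneg fun i _ => hp.1 _
  rw [le_div_iff₀ (by positivity)]
  refine le_of_mul_le_mul_left ?_ hn'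
  rw [← sum_prod_mul_sum_sq hp.2 hg n, ← mul_assoc, mul_comm (n : ℝ), mul_assoc, sum_mul]
  refine (sum_le_sum fun x hx => ?_).trans
    (sum_le_sum_of_subset_of_nonneg (filter_subset _ _) fun x _ _ =>
      mul_nonneg (h0 x) (sq_nonneg _))
  refine mul_le_mul_of_nonneg_left ?_ (h0 x)
  rw [← sq_abs (∑ i, g (x i))]
  have := (mem_filter.1 hx).2
  calc (n : ℝ) * (n * δ ^ 2) = (n * δ) ^ 2 := by ring
    _ ≤ _ := pow_le_pow_left₀ (by positivity) this.le 2

/-- Sequences whose empirical surprisal deviates from the entropy by at most `δ`. -/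
noncomputable def typicalSet {α : Type*} [Fintype α] (p : α → ℝ) (δ : ℝ) (n : ℕ) :
    Finset (Fin n → α) :=
  univ.filter fun x => |∑ i, (-Real.log (p (x i)) - shEnt p)| ≤ n * δ

section Typical

variable {α : Type*} [Fintype α] {p : α → ℝ} {δ : ℝ}

theorem exp_le_prod_le_of_mem_typicalSet (hpos : ∀ a, 0 < p a) {n : ℕ} {x : Fin n → α}
    (hx : x ∈ typicalSet p δ n) :
    Real.exp (-(n * (shEnt p + δ))) ≤ ∏ i, p (x i) ∧
      ∏ i, p (x i) ≤ Real.exp (-(n * (shEnt p - δ))) := by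
  have h := (mem_filter.1 hx).2
  have hlog : ∏ i, p (x i) = Real.exp (∑ i, Real.log (p (x i))) := by
    rw [Real.exp_sum]
    exact prod_congr rfl fun i _ => (Real.exp_log (hpos _)).symm
  rw [hlog, Real.exp_le_exp, Real.exp_le_exp]
  simp only [sum_sub_distrib, sum_neg_distrib, sum_const, card_univ, Fintype.card_fin,
    nsmul_eq_mul] at h
  constructor <;> linarith [abs_le.1 h]

theorem card_typicalSet_le (hp : IsProbVec p) (hpos : ∀ a, 0 < p a) (n : ℕ) :
    ((typicalSet p δ n).card : ℝ) ≤ Real.exp (n * (shEnt p + δ)) := by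
  have h : (typicalSet p δ n).card * Real.exp (-(n * (shEnt p + δ))) ≤ 1 :=
    calc _ = ∑ x ∈ typicalSet p δ n, Real.exp (-(n * (shEnt p + δ))) := by
          rw [sum_const, nsmul_eq_mul]
      _ ≤ ∑ x ∈ typicalSet p δ n, ∏ i, p (x i) :=
          sum_le_sum fun x hx => (exp_le_prod_le_of_mem_typicalSet hpos hx).1
      _ ≤ ∑ x : Fin n → α, ∏ i, p (x i) := sum_le_sum_of_subset_of_nonneg (subset_univ _)
          fun x _ _ => prod_nonneg fun i _ => hp.1 _
      _ = 1 := by rw [← Fintype.sum_pow, hp.2, one_pow]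
  rwa [Real.exp_neg, ← div_eq_mul_inv, div_le_one (Real.exp_pos _)] at h

theorem tendsto_sum_typicalSet (hp : IsProbVec p) (hδ : 0 < δ) :
    Filter.Tendsto (fun n => ∑ x ∈ typicalSet p δ n, ∏ i, p (x i)) Filter.atTop (nhds 1) := by
  set g : α → ℝ := fun a => -Real.log (p a) - shEnt p with hgdef
  have hg : ∑ a, p a * g a = 0 := by
    simp only [hgdef, mul_sub, sum_sub_distrib, ← sum_mul, hp.2, shEnt]
    simp
  have hone : ∀ n, ∑ x : Fin n → α, ∏ i, p (x i) = 1 := fun n => by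
    rw [← Fintype.sum_pow, hp.2, one_pow]
  have hlim : Filter.Tendsto (fun n : ℕ => 1 - (∑ a, p a * g a ^ 2) / (n * δ ^ 2))
      Filter.atTop (nhds 1) := by
    have : Filter.Tendsto (fun n : ℕ => ((∑ a, p a * g a ^ 2) / δ ^ 2) / (n : ℝ))
        Filter.atTop (nhds 0) := tendsto_const_div_atTop_nhds_zero_nat _
    simpa [div_div, mul_comm] using this.const_sub 1
  refine tendsto_of_tendsto_of_tendsto_of_le_of_le' hlim tendsto_const_nhds ?_ ?_
  · filter_upwards [Filter.eventually_gt_atTop 0] with n hn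
    have h := sum_prod_filter_le hp hg hn hδ
    have hs := sum_filter_add_sum_filter_not univ
      (fun x : Fin n → α => |∑ i, g (x i)| ≤ n * δ) (fun x => ∏ i, p (x i))
    simp only [not_le, hone n] at hs
    have : ∑ x ∈ typicalSet p δ n, ∏ i, p (x i) =
        ∑ x ∈ univ.filter (fun x : Fin n → α => |∑ i, g (x i)| ≤ n * δ), ∏ i, p (x i) := rfl
    linarith
  · filter_upwards with n
    rw [← hone n]
    exact sum_le_sum_of_subset_of_nonneg (subset_univ _)
      fun x _ _ => prod_nonneg fun i _ => hp.1 _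

end Typical

/-- Asymptotic conversion: if `p` has smaller entropy than `q`, then many copies of `p` can be mapped
arbitrarily close to equally many copies of `q`. -/
theorem exists_bistochReach_prod_near {α : Type*} [Fintype α] [DecidableEq α] {p q : α → ℝ}
    (hp : IsProbVec p) (hq : IsProbVec q) (hpp : ∀ a, 0 < p a) (hqp : ∀ a, 0 < q a)
    (h : shEnt p < shEnt q) {ε : ℝ} (hε : 0 < ε) :
    ∃ (m : ℕ) (y : (Fin (m + 1) → α) → ℝ), BistochReach (fun x => ∏ i, p (x i)) y ∧
      IsProbVec y ∧ ∑ x, |y x - ∏ i, q (x i)| ≤ ε := by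
  set δ := (shEnt q - shEnt p) / 3 with hδdef
  have hδ : 0 < δ := by simp only [hδdef]; linarith
  have hexp : Filter.Tendsto (fun n : ℕ => Real.exp (-(n * δ))) Filter.atTop (nhds 0) :=
    Real.tendsto_exp_neg_atTop_nhds_zero.comp
      (tendsto_natCast_atTop_atTop.atTop_mul_const hδ)
  have hone : ∀ {s : α → ℝ}, IsProbVec s → ∀ n, IsProbVec fun x : Fin n → α => ∏ i, s (x i) :=
    fun hs n => ⟨fun x => prod_nonneg fun i _ => hs.1 _, by
      rw [← Fintype.sum_pow, hs.2, one_pow]⟩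
  obtain ⟨n, hn0, hPn, hQn, hQ2, hen⟩ := ((Filter.eventually_gt_atTop 0).and
    (((tendsto_sum_typicalSet hp hδ).eventually (lt_mem_nhds (show 1 - ε / 4 < 1 by linarith))).and
    (((tendsto_sum_typicalSet hq hδ).eventually (lt_mem_nhds (show 1 - ε / 4 < 1 by linarith))).and
    (((tendsto_sum_typicalSet hq hδ).eventually (lt_mem_nhds (show (1 / 2 : ℝ) < 1 by norm_num))).and
    (hexp.eventually (gt_mem_nhds (show (0 : ℝ) < 1 / 2 by norm_num))))))).exists
  obtain ⟨m, rfl⟩ : ∃ m, n = m + 1 := ⟨n - 1, by omega⟩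
  set n := m + 1
  set Q := ∑ x ∈ typicalSet q δ n, ∏ i, q (x i) with hQ
  have hQ1 : Q ≤ 1 := by
    rw [← (hone hq n).2]
    exact sum_le_sum_of_subset_of_nonneg (subset_univ _) fun x _ _ => (hone hq n).1 x
  have hQ0 : 0 < Q := by linarith
  set w : (Fin n → α) → ℝ := fun x => if x ∈ typicalSet q δ n then (∏ i, q (x i)) / Q else 0
    with hw
  have hwprob : IsProbVec w := by
    constructor
    · intro x
      simp only [hw]
      split_ifs
      exacts [div_nonneg ((hone hq n).1 x) hQ0.le, le_rfl]
    · rw [hw, sum_ite_mem, univ_inter, ← sum_div, div_self hQ0.ne']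
  have hcard : ∀ x, (typicalSet p δ n).card * w x ≤ 1 := by
    intro x
    simp only [hw]
    split_ifs with hx
    · rw [← mul_div_assoc, div_le_one hQ0]
      calc _ ≤ Real.exp (n * (shEnt p + δ)) * Real.exp (-(n * (shEnt q - δ))) :=
            mul_le_mul (card_typicalSet_le hp hpp n) (exp_le_prod_le_of_mem_typicalSet hqp hx).2
              ((hone hq n).1 x) (Real.exp_pos _).le
        _ = Real.exp (-(n * δ)) := by
            rw [← Real.exp_add]
            congr 1
            simp only [hδdef]
            ring
        _ ≤ Q := by linarith
    · simp
  obtain ⟨y, hy, hyprob, hyw⟩ := BistochReach.exists_near (hone hp n) hwprob _ hcard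
  refine ⟨m, y, hy, hyprob, ?_⟩
  have hwq : ∑ x, |w x - ∏ i, q (x i)| = 2 * (1 - Q) := by
    have hs : ∀ x, |w x - ∏ i, q (x i)| =
        w x + ∏ i, q (x i) - 2 * if x ∈ typicalSet q δ n then ∏ i, q (x i) else 0 := by
      intro x
      have h0 := (hone hq n).1 x
      simp only [hw]
      split_ifs with hx
      · have : ∏ i, q (x i) ≤ (∏ i, q (x i)) / Q := le_div_self h0 hQ0 hQ1
        rw [abs_of_nonneg (by linarith)]
        ring
      · rw [zero_sub, abs_neg, abs_of_nonneg h0]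
        ring
    simp only [hs, sum_sub_distrib, sum_add_distrib, hwprob.2, (hone hq n).2, ← mul_sum,
      sum_ite_mem, univ_inter, ← hQ]
    ring
  calc ∑ x, |y x - ∏ i, q (x i)| ≤ ∑ x, (|y x - w x| + |w x - ∏ i, q (x i)|) :=
        sum_le_sum fun x _ => abs_sub_le _ _ _
    _ ≤ ε := by
        rw [sum_add_distrib, hwq]
        linarith

/-- The hybrid distribution whose first `k` coordinates are independent copies of `p` and whose
remaining coordinates are jointly distributed according to `y`. -/
def hybrid {α : Type*} [Fintype α] [DecidableEq α] {n : ℕ} (p : α → ℝ) (y : (Fin n → α) → ℝ)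
    (k : ℕ) (x : Fin n → α) : ℝ :=
  ∑ u, y u * ∏ i : Fin n, if (i : ℕ) < k then p (x i) else if x i = u i then 1 else 0

section Hybrid

variable {α : Type*} [Fintype α] [DecidableEq α] {p : α → ℝ}

theorem hybrid_zero {n : ℕ} (y : (Fin n → α) → ℝ) : hybrid p y 0 = y := by
  ext x
  have h : ∀ u : Fin n → α, (∏ i, if x i = u i then (1 : ℝ) else 0) = if x = u then 1 else 0 := by
    intro u
    rw [prod_ite_zero]
    simp [funext_iff]
  simp [hybrid, h]

theorem hybrid_self {n : ℕ} {y : (Fin n → α) → ℝ} (hy : ∑ u, y u = 1) :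
    hybrid p y n = fun x => ∏ i, p (x i) := by
  ext x
  simp [hybrid, ← sum_mul, hy]

theorem hybrid_nonneg (hp : ∀ a, 0 ≤ p a) {n : ℕ} {y : (Fin n → α) → ℝ} (hy : ∀ u, 0 ≤ y u)
    (k : ℕ) (x : Fin n → α) : 0 ≤ hybrid p y k x := by
  refine sum_nonneg fun u _ => mul_nonneg (hy u) (prod_nonneg fun i _ => ?_)
  split_ifs
  exacts [hp _, zero_le_one, le_rfl]

variable {m : ℕ} (y : (Fin (m + 1) → α) → ℝ) (k : Fin (m + 1)) (a : α) (z : Fin m → α)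

theorem hybrid_insertNth : hybrid p y k (k.insertNth a z) =
    ∑ u, if u k = a then y u * ∏ j, (if (k.succAbove j : ℕ) < k then p (z j)
      else if z j = u (k.succAbove j) then 1 else 0) else 0 := by
  refine sum_congr rfl fun u _ => ?_
  rw [Fin.prod_univ_succAbove _ k]
  simp [eq_comm (a := a)]

/-- Passing from one hybrid to the next resamples one coordinate. -/
theorem hybrid_succ_insertNth : hybrid p y (k + 1) (k.insertNth a z) =
    p a * ∑ b, hybrid p y k (k.insertNth b z) := by
  have hlt : ∀ j, ((k.succAbove j : ℕ) < k + 1 ↔ (k.succAbove j : ℕ) < k) := by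
    intro j
    have : (k.succAbove j : ℕ) ≠ k := fun h => k.succAbove_ne j (Fin.ext h)
    omega
  simp only [hybrid_insertNth]
  rw [sum_comm, mul_sum]
  refine sum_congr rfl fun u _ => ?_
  rw [Fin.prod_univ_succAbove _ k]
  simp only [Fin.insertNth_apply_same, Fin.insertNth_apply_succAbove, hlt, sum_ite_eq, mem_univ,
    if_true, Nat.lt_succ_self]
  ring

theorem sum_hybrid_insertNth (hp : ∑ b, p b = 1) :
    ∑ z, hybrid p y k (k.insertNth a z) = ∑ u, if u k = a then y u else 0 := by
  simp only [hybrid_insertNth]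
  rw [sum_comm]
  refine sum_congr rfl fun u _ => ?_
  split_ifs
  · rw [← mul_sum, ← Fintype.prod_sum fun (j : Fin m) b => if (k.succAbove j : ℕ) < k then p b
      else if b = u (k.succAbove j) then 1 else 0, prod_eq_one, mul_one]
    intro j _
    split_ifs <;> simp [hp]
  · simp

end Hybrid

/-- A conversion of `m + 1` copies of `p` yields a single-copy conversion of `p` with a correlated
catalyst; the output system is distributed as a uniformly random coordinate of the many-copy output. -/
theorem exists_correlated_catalyst {α : Type*} [Fintype α] [DecidableEq α] {p : α → ℝ}
    (hp : IsProbVec p) {m : ℕ} {y : (Fin (m + 1) → α) → ℝ} (hy : IsProbVec y)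
    (h : BistochReach (fun x => ∏ i, p (x i)) y) :
    ∃ (c : (Fin m → α) × Fin (m + 1) → ℝ) (s : α × (Fin m → α) × Fin (m + 1) → ℝ),
      IsProbVec c ∧ BistochReach (pvTensor p c) s ∧ (∀ z, ∑ a, s (a, z) = c z) ∧
      ∀ a, ∑ z, s (a, z) = (m + 1 : ℝ)⁻¹ * ∑ k, ∑ u, if u k = a then y u else 0 := by
  have hm : (0 : ℝ) < (m + 1 : ℝ)⁻¹ := by positivity
  set φ : α × (Fin m → α) × Fin (m + 1) ≃ (Fin (m + 1) → α) × Fin (m + 1) :=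
    (Equiv.prodAssoc _ _ _).symm.trans
      (Equiv.prodCongrLeft fun k => Fin.insertNthEquiv (fun _ => α) k) with hφ
  set S : (Fin (m + 1) → α) × Fin (m + 1) → ℝ :=
    fun v => (m + 1 : ℝ)⁻¹ * hybrid p y v.2 v.1 with hS
  set T : (Fin (m + 1) → α) × Fin (m + 1) → ℝ :=
    fun v => (m + 1 : ℝ)⁻¹ * hybrid p y (v.2 + 1) v.1 with hT
  have hφa : ∀ a z k, φ (a, z, k) = (k.insertNth a z, k) := fun a z k => rfl
  have hmarg : ∀ a, ∑ z, S (φ (a, z)) =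
      (m + 1 : ℝ)⁻¹ * ∑ k, ∑ u, if u k = a then y u else 0 := by
    intro a
    simp only [Fintype.sum_prod_type_right, hS, hφa, ← mul_sum, sum_hybrid_insertNth y _ a hp.2]
  have hTS : BistochReach T (S ∘ Equiv.prodCongr (Equiv.refl _) (finRotate (m + 1))) := by
    refine BistochReach.of_blocks fun k => BistochReach.smul (c := (m + 1 : ℝ)⁻¹) ?_
    rcases Fin.eq_castSucc_or_eq_last k with ⟨j, rfl⟩ | rfl
    · simpa using BistochReach.refl _
    · simpa [hybrid_zero, hybrid_self hy.2] using h
  refine ⟨fun z => ∑ a, S (φ (a, z)), S ∘ φ, ⟨fun z => ?_, ?_⟩, ?_, fun z => rfl, hmarg⟩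
  · exact sum_nonneg fun a _ => mul_nonneg hm.le (hybrid_nonneg hp.1 hy.1 _ _)
  · have hk : ∀ k : Fin (m + 1), ∑ a, ∑ u, (if u k = a then y u else 0) = 1 := by
      intro k
      rw [sum_comm]
      simp [hy.2]
    rw [sum_comm]
    simp only [hmarg, ← mul_sum]
    rw [sum_comm]
    simp only [hk, sum_const, card_univ, Fintype.card_fin, nsmul_eq_mul]
    push_cast
    field_simp
  · have := hTS.comp_equiv φ
      (φ.trans (Equiv.prodCongr (Equiv.refl _) (finRotate (m + 1))).symm)
    convert this using 1
    · ext ⟨a, z, k⟩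
      simp only [pvTensor, Function.comp_apply, hT, hS, hφa, hybrid_succ_insertNth, ← mul_sum]
      ring
    · ext v
      simp only [Function.comp_apply, Equiv.trans_apply, Equiv.apply_symm_apply]

theorem continuous_shEnt {α : Type*} [Fintype α] : Continuous (shEnt : (α → ℝ) → ℝ) := by
  unfold shEnt
  exact (continuous_finsetSum _ fun a _ => Real.continuous_mul_log.comp (continuous_apply a)).neg

/-- Every positive probability vector `q` is reachable from a whole neighbourhood of some positive
probability vector whose entropy is as close to that of `q` as desired. -/
theorem exists_neighbourhood_bistochReach {α : Type*} [Fintype α] [DecidableEq α] {q : α → ℝ}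
    (hq : IsProbVec q) (hqp : ∀ a, 0 < q a) {H : ℝ} (hH : H < shEnt q) :
    ∃ q₀, IsProbVec q₀ ∧ (∀ a, 0 < q₀ a) ∧ H < shEnt q₀ ∧ ∃ ε > 0, ∀ q', ∑ a, q' a = 1 →
      (∀ a, |q' a - q₀ a| ≤ ε) → BistochReach q' q := by
  set d : ℝ := (Fintype.card α : ℝ) with hd
  have hd0 : 0 < d := by
    have : Nonempty α := by
      by_contra h
      rw [not_nonempty_iff] at h
      simpa using hq.2
    exact Nat.cast_pos.2 Fintype.card_pos
  by_cases hconst : ∀ i j, q i ≤ q j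
  · refine ⟨q, hq, hqp, hH, 1, one_pos, fun q' hq' _ => ⟨Matrix.of fun _ _ => d⁻¹, ?_, ?_⟩⟩
    · refine mem_doublyStochastic_iff_sum.2 ⟨fun i j => ?_, fun i => ?_, fun j => ?_⟩ <;>
        simp [← hd, hd0.le, hd0.ne']
    · ext i
      have h : d * q i = 1 := by
        rw [← hq.2, sum_congr rfl fun j _ => le_antisymm (hconst j i) (hconst i j)]
        simp [hd]
      simp [mulVec, dotProduct, ← mul_sum, hq', eq_inv_of_mul_eq_one_right h]
  push Not at hconst
  obtain ⟨i, j, hij⟩ := hconst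
  obtain ⟨s, hs0, hs1, hspos, hsH⟩ : ∃ s : ℝ, 0 < s ∧ s < 1 ∧ (∀ a, 0 < q a - s / d) ∧
      H < shEnt fun a => (q a - s / d) / (1 - s) := by
    have hcont : ContinuousAt (fun s : ℝ => shEnt fun a => (q a - s / d) / (1 - s)) 0 := by
      refine continuous_shEnt.continuousAt.comp (continuousAt_pi.2 fun a => ?_)
      exact ContinuousAt.div (by fun_prop) (by fun_prop) (by simp)
    have h1 : ∀ᶠ s : ℝ in nhds 0, H < shEnt fun a => (q a - s / d) / (1 - s) :=
      hcont.eventually (lt_mem_nhds (by simpa using hH))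
    have h2 : ∀ᶠ s : ℝ in nhds 0, ∀ a, 0 < q a - s / d := by
      refine Filter.eventually_all.2 fun a => ?_
      have : ContinuousAt (fun s : ℝ => q a - s / d) 0 := by fun_prop
      exact this.eventually (lt_mem_nhds (by simpa using hqp a))
    have h3 : ∀ᶠ s : ℝ in nhds 0, s < 1 := gt_mem_nhds one_pos
    obtain ⟨s, ⟨hH', hp', h1'⟩, hs⟩ := (((h1.and (h2.and h3)).filter_mono
      (nhdsWithin_le_nhds (s := Set.Ioi 0))).and self_mem_nhdsWithin).exists
    exact ⟨s, hs, h1', hp', hH'⟩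
  have hs1' : 0 < 1 - s := by linarith
  set q₀ : α → ℝ := fun a => (q a - s / d) / (1 - s) with hq₀
  have hq₀s : ∀ a, (1 - s) * q₀ a + s / d = q a := by
    intro a
    simp only [hq₀]
    field_simp
    ring
  have hgap : q i - q j ≤ q₀ i - q₀ j := by
    have : (1 - s) * (q₀ i - q₀ j) = q i - q j := by linarith [hq₀s i, hq₀s j]
    nlinarith
  set g := q i - q j with hg
  have hg0 : 0 < g := sub_pos.2 hij
  refine ⟨q₀, ⟨fun a => (div_pos (hspos a) hs1').le, ?_⟩, fun a => div_pos (hspos a) hs1', hsH,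
    min (g / 4) (s / d * (g / 2)), by positivity, fun q' hq' hnear => ?_⟩
  · simp only [hq₀, ← sum_div, sum_sub_distrib, hq.2, sum_const, card_univ, nsmul_eq_mul, ← hd]
    field_simp
  set G := q' i - q' j with hG
  have hGg : g / 2 ≤ G := by
    have h1 := abs_le.1 ((hnear i).trans (min_le_left _ _))
    have h2 := abs_le.1 ((hnear j).trans (min_le_left _ _))
    linarith
  have hG0 : 0 < G := by linarith
  set e : α → ℝ := fun a => (1 - s) * (q₀ a - q' a) with he
  have heb : ∀ a, |e a / G| ≤ s / d := by
    intro a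
    rw [abs_div, abs_of_pos hG0, div_le_iff₀ hG0]
    calc |e a| = (1 - s) * |q' a - q₀ a| := by
          rw [he, abs_mul, abs_of_pos hs1', abs_sub_comm]
      _ ≤ 1 * (s / d * (g / 2)) :=
          mul_le_mul (by linarith) ((hnear a).trans (min_le_right _ _)) (abs_nonneg _) zero_le_one
      _ ≤ s / d * G := by
          rw [one_mul]
          exact mul_le_mul_of_nonneg_left hGg (by positivity)
  have hes : ∑ a, e a = 0 := by
    have hs' : ∑ a, q₀ a = 1 := by
      have : ∑ a, ((1 - s) * q₀ a + s / d) = 1 := by simp only [hq₀s, hq.2]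
      simp only [sum_add_distrib, ← mul_sum, sum_const, card_univ, nsmul_eq_mul, ← hd] at this
      field_simp at this
      nlinarith
    rw [he, ← mul_sum, sum_sub_distrib, hs', hq', sub_self, mul_zero]
  set D : Matrix α α ℝ := Matrix.of fun a b => (1 - s) * (if a = b then 1 else 0) + s / d +
    e a / G * ((if b = i then 1 else 0) - (if b = j then 1 else 0)) with hD
  refine ⟨D, mem_doublyStochastic_iff_sum.2 ⟨fun a b => ?_, fun a => ?_, fun b => ?_⟩, ?_⟩
  · simp only [hD, of_apply]
    have h1 : 0 ≤ (1 - s) * (if a = b then (1 : ℝ) else 0) :=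
      mul_nonneg hs1'.le (by split_ifs <;> simp)
    have h2 := abs_le.1 (heb a)
    have h3 : 0 < s / d := by positivity
    split_ifs <;> simp_all <;> linarith
  · simp only [hD, of_apply, sum_add_distrib, ← mul_sum, sum_sub_distrib, sum_ite_eq, sum_ite_eq',
      mem_univ, if_true, sum_const, card_univ, nsmul_eq_mul, ← hd]
    field_simp
    ring
  · simp only [hD, of_apply, sum_add_distrib, ← mul_sum, ← sum_mul, ← sum_div, hes, sum_ite_eq',
      mem_univ, if_true, sum_const, card_univ, nsmul_eq_mul, ← hd]
    field_simp
    ring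
  · ext a
    have h1 : (D *ᵥ q') a = (1 - s) * q' a + s / d * ∑ b, q' b + e a / G * (q' i - q' j) := by
      simp [mulVec, dotProduct, hD, add_mul, sum_add_distrib, mul_assoc, sub_mul, ← mul_sum]
    rw [h1, hq', ← hG, div_mul_cancel₀ _ hG0.ne', ← hq₀s a]
    ring

/-- Strict increase of the entropy suffices for an exact conversion with a catalyst that may end up
correlated with the system. -/
theorem exists_correlated_conversion {α : Type*} [Fintype α] [DecidableEq α] {p q : α → ℝ}
    (hp : IsProbVec p) (hq : IsProbVec q) (hpp : ∀ a, 0 < p a) (hqp : ∀ a, 0 < q a)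
    (h : shEnt p < shEnt q) :
    ∃ (m : ℕ) (c : (Fin m → α) × Fin (m + 1) → ℝ) (s : α × (Fin m → α) × Fin (m + 1) → ℝ),
      IsProbVec c ∧ IsProbVec s ∧ BistochReach (pvTensor p c) s ∧ (∀ z, ∑ a, s (a, z) = c z) ∧
      ∀ a, ∑ z, s (a, z) = q a := by
  obtain ⟨q₀, hq₀, hq₀p, hH, ε, hε, hreach⟩ := exists_neighbourhood_bistochReach hq hqp h
  obtain ⟨m, y, hy, hyprob, hyq⟩ := exists_bistochReach_prod_near hp hq₀ hpp hq₀p hH hε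
  obtain ⟨c, s, hc, hs, hsc, hsa⟩ := exists_correlated_catalyst hp hyprob hy
  have hsnonneg : ∀ v, 0 ≤ s v := by
    obtain ⟨B, hB, rfl⟩ := hs
    exact fun v => sum_nonneg fun w _ =>
      mul_nonneg (hB.1 v w) (mul_nonneg (hp.1 _) (hc.1 _))
  have hssum : ∑ a, ∑ z, s (a, z) = 1 := by
    rw [sum_comm]
    simp only [hsc, hc.2]
  have hmarg : ∀ k a, ∑ u : Fin (m + 1) → α, (if u k = a then ∏ i, q₀ (u i) else 0) = q₀ a := by
    intro k a
    rw [← (Fin.insertNthEquiv (fun _ => α) k).sum_comp, Fintype.sum_prod_type]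
    simp [Fin.insertNthEquiv, Fin.prod_univ_succAbove _ k, ← mul_sum, ← Fintype.sum_pow, hq₀.2]
  have hnear : ∀ a, |∑ z, s (a, z) - q₀ a| ≤ ε := by
    intro a
    have hk : ∀ k, |∑ u, (if u k = a then y u else 0) - q₀ a| ≤ ε := by
      intro k
      rw [← hmarg k a, ← sum_sub_distrib]
      refine (abs_sum_le_sum_abs _ _).trans ((sum_le_sum fun u _ => ?_).trans hyq)
      split_ifs
      · exact le_rfl
      · simp
    have hm : (0 : ℝ) < m + 1 := by positivity
    have : ∑ z, s (a, z) - q₀ a =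
        (m + 1 : ℝ)⁻¹ * ∑ k, (∑ u, (if u k = a then y u else 0) - q₀ a) := by
      rw [hsa, sum_sub_distrib, sum_const, card_univ, Fintype.card_fin, nsmul_eq_mul]
      push_cast
      field_simp
    rw [this, abs_mul, abs_of_pos (inv_pos.2 hm), inv_mul_le_iff₀ hm]
    refine (abs_sum_le_sum_abs _ _).trans ((sum_le_sum fun k _ => hk k).trans ?_)
    simp
  obtain ⟨D, hD, hDq⟩ := hreach _ hssum hnear
  refine ⟨m, c, fun v => ∑ b, D v.1 b * s (b, v.2), hc, ⟨fun v => ?_, ?_⟩,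
    hs.trans (BistochReach.of_blocks fun z => ⟨D, hD, rfl⟩), fun z => ?_, fun a => ?_⟩
  · exact sum_nonneg fun b _ => mul_nonneg (hD.1 _ _) (hsnonneg _)
  · rw [Fintype.sum_prod_type, ← hq.2]
    refine sum_congr rfl fun a _ => ?_
    rw [sum_comm, ← hDq]
    simp only [mulVec, dotProduct, mul_sum]
  · rw [sum_comm]
    simp only [← sum_mul, sum_col_of_mem_doublyStochastic hD, one_mul, hsc]
  · rw [sum_comm, ← hDq]
    simp only [mulVec, dotProduct, mul_sum]

/-- A catalyst correlated with the system can be traded for two catalysts correlated with each other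
but not with the system: swap the system with a fresh copy of the target. -/
theorem exists_marginal_catalysts {d : ℕ} {p q : Fin d → ℝ} {C : Type*} [Fintype C]
    [DecidableEq C] {c : C → ℝ} {s : Fin d × C → ℝ} (hq : IsProbVec q) (hc : IsProbVec c)
    (hs : IsProbVec s) (h : BistochReach (pvTensor p c) s) (hsc : ∀ z, ∑ a, s (a, z) = c z)
    (hsq : ∀ a, ∑ z, s (a, z) = q a) :
    ∃ (k : Fin 2 → ℕ) (r : (j : Fin 2) → Fin (k j) → ℝ) (t : ((j : Fin 2) → Fin (k j)) → ℝ),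
      (∀ j, IsProbVec (r j)) ∧ IsProbVec t ∧
      (∀ (j : Fin 2) (a : Fin (k j)),
        ∑ f ∈ Finset.univ.filter (fun f : (j' : Fin 2) → Fin (k j') => f j = a), t f = r j a) ∧
      BistochReach (pvTensor p fun f => ∏ j, r j (f j)) (pvTensor q t) := by
  set e : Fin (Fintype.card C) ≃ C := (Fintype.equivFin C).symm
  set k : Fin 2 → ℕ := ![Fintype.card C, d]
  set g : ((j : Fin 2) → Fin (k j)) ≃ C × Fin d :=
    (piFinTwoEquiv fun j => Fin (k j)).trans (Equiv.prodCongr e (Equiv.refl (Fin d)))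
  have hga : ∀ f, g f = (e (f 0), f 1) := fun f => rfl
  set r : (j : Fin 2) → Fin (k j) → ℝ := fun j => match j with
    | 0 => c ∘ e
    | 1 => q
  set t : ((j : Fin 2) → Fin (k j)) → ℝ := fun f => s ((g f).2, (g f).1) with ht
  refine ⟨k, r, t, fun j => ?_, ⟨fun f => hs.1 _, ?_⟩, fun j a => ?_, ?_⟩
  · match j with
    | 0 => exact ⟨fun a => hc.1 _, (e.sum_comp c).trans hc.2⟩
    | 1 => exact hq
  · rw [g.sum_comp (fun v => s (v.2, v.1)), Fintype.sum_prod_type_right, ← hs.2,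
      Fintype.sum_prod_type]
  · rw [sum_filter]
    match j with
    | 0 =>
      have : ∀ f : (j : Fin 2) → Fin (k j), (if f 0 = a then t f else 0) =
          (fun v : C × Fin d => if v.1 = e a then s (v.2, v.1) else 0) (g f) :=
        fun f => if_congr e.apply_eq_iff_eq.symm rfl rfl
      simp only [this]
      rw [g.sum_comp (fun v : C × Fin d => if v.1 = e a then s (v.2, v.1) else 0),
        Fintype.sum_prod_type_right]
      simp only [sum_ite_eq', mem_univ, if_true, hsc]
      rfl
    | 1 =>
      let b : Fin d := a
      have : ∀ f : (j : Fin 2) → Fin (k j), (if f 1 = a then t f else 0) =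
          (fun v : C × Fin d => if v.2 = b then s (v.2, v.1) else 0) (g f) := fun f => rfl
      simp only [this]
      rw [g.sum_comp (fun v : C × Fin d => if v.2 = b then s (v.2, v.1) else 0),
        Fintype.sum_prod_type]
      simp only [sum_ite_eq', mem_univ, if_true]
      exact hsq a
  · have hblocks : BistochReach (fun v : (Fin d × C) × Fin d => q v.2 * pvTensor p c v.1)
        (fun v => q v.2 * s v.1) := BistochReach.of_blocks fun b => h.smul (q b)
    convert hblocks.comp_equiv
      ((Equiv.prodCongr (Equiv.refl _) g).trans (Equiv.prodAssoc _ _ _).symm)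
      ((Equiv.prodCongr (Equiv.refl _) g).trans ((Equiv.prodComm _ _).trans
        (Equiv.prodCongr (Equiv.prodComm _ _) (Equiv.refl _)))) using 1
    · ext ⟨x, f⟩
      have hr₀ : r 0 (f 0) = c (e (f 0)) := rfl
      have hr₁ : r 1 (f 1) = q (f 1) := rfl
      simp [pvTensor, hga, hr₀, hr₁, Fin.prod_univ_two]
      ring
    · rfl

/-- Vectors with the same power sums are rearrangements of each other. -/
theorem exists_perm_of_sum_pow_eq {ι : Type*} [Fintype ι] {x y : ι → ℝ}
    (h : ∀ n : ℕ, ∑ i, x i ^ n = ∑ i, y i ^ n) : ∃ σ : Equiv.Perm ι, x = y ∘ σ := by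
  classical
  have hpoly : ∀ P : Polynomial ℝ, ∑ i, P.eval (x i) = ∑ i, P.eval (y i) := by
    intro P
    simp only [Polynomial.eval_eq_sum_range]
    rw [sum_comm, sum_comm (s := univ)]
    simp only [← mul_sum, h]
  have hcard : ∀ a, Fintype.card {i // x i = a} = Fintype.card {i // y i = a} := by
    intro a
    set S : Finset ℝ := (univ.image x ∪ univ.image y).erase a with hS
    set P : Polynomial ℝ := ∏ b ∈ S, (Polynomial.X - Polynomial.C b) with hP
    have heval : ∀ v, P.eval v = ∏ b ∈ S, (v - b) := fun v => by
      simp [hP, Polynomial.eval_prod]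
    have ha : P.eval a ≠ 0 := by
      rw [heval, prod_ne_zero_iff]
      exact fun b hb => sub_ne_zero.2 (ne_of_mem_erase hb).symm
    have hz : ∀ v, v ∈ univ.image x ∪ univ.image y →
        P.eval v = if v = a then P.eval a else 0 := by
      intro v hv
      split_ifs with hva
      · rw [hva]
      · rw [heval]
        exact prod_eq_zero (mem_erase.2 ⟨hva, hv⟩) (sub_self v)
    have hsum := hpoly P
    rw [sum_congr rfl fun i _ => hz (x i) (by simp),
      sum_congr rfl fun i _ => hz (y i) (by simp)] at hsum
    simp only [← sum_filter, sum_const, nsmul_eq_mul] at hsum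
    rw [Fintype.card_subtype, Fintype.card_subtype]
    exact_mod_cast mul_right_cancel₀ ha hsum
  refine ⟨Equiv.ofFiberEquiv fun a => Fintype.equivOfCardEq (hcard a), ?_⟩
  ext i
  exact (Equiv.ofFiberEquiv_map _ i).symm

theorem shEnt_eq_sum_negMulLog {ι : Type*} [Fintype ι] (v : ι → ℝ) :
    shEnt v = ∑ i, Real.negMulLog (v i) := by
  simp [shEnt, Real.negMulLog]

theorem shEnt_pvTensor {ι κ : Type*} [Fintype ι] [Fintype κ] {x : ι → ℝ} {y : κ → ℝ}
    (hx : ∑ i, x i = 1) (hy : ∑ j, y j = 1) :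
    shEnt (pvTensor x y) = shEnt x + shEnt y := by
  simp only [shEnt_eq_sum_negMulLog, pvTensor, Fintype.sum_prod_type, Real.negMulLog_mul,
    sum_add_distrib, ← sum_mul, ← mul_sum, hx, hy, one_mul]

namespace BistochReach

variable {ι : Type*} [Fintype ι] [DecidableEq ι] {x y : ι → ℝ}

theorem shEnt_le (h : BistochReach x y) (hx : ∀ i, 0 ≤ x i) : shEnt x ≤ shEnt y := by
  obtain ⟨B, hB, rfl⟩ := h
  simp only [shEnt_eq_sum_negMulLog]
  calc ∑ j, Real.negMulLog (x j) = ∑ i, ∑ j, B i j * Real.negMulLog (x j) := by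
        rw [sum_comm]
        simp only [← sum_mul, sum_col_of_mem_doublyStochastic hB, one_mul]
    _ ≤ _ := sum_le_sum fun i _ => Real.concaveOn_negMulLog.le_map_sum (fun j _ => hB.1 i j)
        (sum_row_of_mem_doublyStochastic hB i) fun j _ => hx j

/-- A doubly stochastic matrix preserving the entropy preserves all power sums. -/
theorem sum_pow_eq (h : BistochReach x y) (hx : ∀ i, 0 ≤ x i) (hxy : shEnt y ≤ shEnt x) (n : ℕ) :
    ∑ i, x i ^ n = ∑ i, y i ^ n := by
  obtain ⟨B, hB, rfl⟩ := h
  simp only [shEnt_eq_sum_negMulLog] at hxy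
  have hcol : ∀ f : ℝ → ℝ, ∑ j, f (x j) = ∑ i, ∑ j, B i j * f (x j) := by
    intro f
    rw [sum_comm]
    simp only [← sum_mul, sum_col_of_mem_doublyStochastic hB, one_mul]
  have hle : ∀ i ∈ univ, ∑ j, B i j * Real.negMulLog (x j) ≤ Real.negMulLog ((B *ᵥ x) i) :=
    fun i _ => Real.concaveOn_negMulLog.le_map_sum (fun j _ => hB.1 i j)
      (sum_row_of_mem_doublyStochastic hB i) fun j _ => hx j
  have heq := (sum_eq_sum_iff_of_le hle).1
    (le_antisymm (sum_le_sum hle) (hxy.trans_eq (hcol _)))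
  have hconst : ∀ i j, B i j ≠ 0 → x j = (B *ᵥ x) i := fun i j hij =>
    (Real.strictConcaveOn_negMulLog.map_sum_eq_iff' (fun j _ => hB.1 i j)
      (sum_row_of_mem_doublyStochastic hB i) fun j _ => hx j).1 (heq i (mem_univ i)).symm j
      (mem_univ j) hij
  rw [hcol (· ^ n)]
  refine sum_congr rfl fun i _ => ?_
  rw [← one_mul ((B *ᵥ x) i ^ n), ← sum_row_of_mem_doublyStochastic hB i, sum_mul]
  refine sum_congr rfl fun j _ => ?_
  rcases eq_or_ne (B i j) 0 with h0 | h0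
  · simp [h0]
  · simp only [hconst i j h0]

end BistochReach

/-- The equality case of Gibbs' inequality. -/
theorem eq_of_crossEntropy_le_shEnt {ι : Type*} [Fintype ι] {t w : ι → ℝ} (ht : IsProbVec t)
    (hw : IsProbVec w) (habs : ∀ i, w i = 0 → t i = 0)
    (hle : -∑ i, t i * Real.log (w i) ≤ shEnt t) : t = w := by
  set K : ι → ℝ := fun i => w i * InformationTheory.klFun (t i / w i) with hK
  have hK0 : ∀ i, 0 ≤ K i := fun i =>
    mul_nonneg (hw.1 i) (InformationTheory.klFun_nonneg (div_nonneg (ht.1 i) (hw.1 i)))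
  have hKi : ∀ i, K i = t i * Real.log (t i) - t i * Real.log (w i) + w i - t i := by
    intro i
    rcases eq_or_ne (w i) 0 with h0 | h0
    · simp [hK, h0, habs i h0]
    rcases eq_or_ne (t i) 0 with h1 | h1
    · simp [hK, h1, InformationTheory.klFun_zero]
    · simp only [hK, InformationTheory.klFun_apply, Real.log_div h1 h0]
      field_simp
  have hKs : ∑ i, K i = -∑ i, t i * Real.log (w i) - shEnt t := by
    simp only [hKi, sum_add_distrib, sum_sub_distrib, ht.2, hw.2, shEnt]
    ring
  have hz : ∑ i, K i = 0 :=
    le_antisymm (by linarith) (sum_nonneg fun i _ => hK0 i)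
  ext i
  have hi := (sum_eq_zero_iff_of_nonneg fun i _ => hK0 i).1 hz i (mem_univ i)
  rcases mul_eq_zero.1 hi with h0 | h0
  · rw [h0, habs i h0]
  · rw [InformationTheory.klFun_eq_zero_iff (div_nonneg (ht.1 i) (hw.1 i))] at h0
    have hw0 : w i ≠ 0 := fun h => by simp [h] at h0
    exact (div_eq_one_iff_eq hw0).1 h0

section Marginals

variable {ι : Type*} [Fintype ι] [DecidableEq ι] {α : ι → Type*} [∀ j, Fintype (α j)]
  {r : (j : ι) → α j → ℝ}

theorem isProbVec_prod (hr : ∀ j, IsProbVec (r j)) :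
    IsProbVec fun f : (j : ι) → α j => ∏ j, r j (f j) :=
  ⟨fun f => prod_nonneg fun j _ => (hr j).1 _, by
    rw [← Fintype.prod_sum]
    exact prod_eq_one fun j _ => (hr j).2⟩

variable [∀ j, DecidableEq (α j)]

theorem marginal_prod (hr : ∀ j, IsProbVec (r j)) (j : ι) (a : α j) :
    ∑ f ∈ univ.filter (fun f : (j' : ι) → α j' => f j = a), ∏ i, r i (f i) = r j a := by
  have hset : univ.filter (fun f : (j' : ι) → α j' => f j = a) =
      Fintype.piFinset (Function.update (fun _ => univ) j {a}) := by
    ext f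
    simp only [mem_filter, mem_univ, true_and, Fintype.mem_piFinset]
    refine ⟨fun hf i => ?_, fun hf => by simpa using hf j⟩
    rcases eq_or_ne i j with rfl | hij
    · simpa using hf
    · simp [hij]
  rw [hset, ← prod_univ_sum, Fintype.prod_eq_single j fun i hij => by simp [hij, (hr i).2]]
  simp

theorem eq_zero_of_prod_marginal_eq_zero {t : ((j : ι) → α j) → ℝ} (ht : ∀ f, 0 ≤ t f)
    (hm : ∀ j a, ∑ f ∈ univ.filter (fun f : (j' : ι) → α j' => f j = a), t f = r j a)
    (f : (j : ι) → α j) (h : ∏ j, r j (f j) = 0) : t f = 0 := by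
  obtain ⟨j, -, hj⟩ := prod_eq_zero_iff.1 h
  rw [← hm] at hj
  exact (sum_eq_zero_iff_of_nonneg fun f _ => ht f).1 hj f (by simp)

/-- The cross entropy relative to a product distribution depends only on the marginals. -/
theorem sum_mul_log_prod_marginal {t : ((j : ι) → α j) → ℝ} (ht : ∀ f, 0 ≤ t f)
    (hm : ∀ j a, ∑ f ∈ univ.filter (fun f : (j' : ι) → α j' => f j = a), t f = r j a) :
    ∑ f, t f * Real.log (∏ j, r j (f j)) = ∑ j, ∑ a, r j a * Real.log (r j a) := by
  have hlog : ∀ f, t f * Real.log (∏ j, r j (f j)) = ∑ j, t f * Real.log (r j (f j)) := by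
    intro f
    rcases eq_or_ne (∏ j, r j (f j)) 0 with h | h
    · simp [eq_zero_of_prod_marginal_eq_zero ht hm f h]
    · rw [Real.log_prod fun j hj => prod_ne_zero_iff.1 h j hj, mul_sum]
  simp only [hlog]
  rw [sum_comm]
  refine sum_congr rfl fun j _ => ?_
  rw [← sum_fiberwise univ (fun f : (j : ι) → α j => f j)]
  refine sum_congr rfl fun a _ => ?_
  rw [← hm j a, sum_mul]
  refine sum_congr rfl fun f hf => ?_
  rw [hm, (mem_filter.1 hf).2]

end Marginals
/-- Müller–Pastena: single-shot characterization of transformations with marginal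
(correlated) catalysts under bistochastic maps by strict increase of Shannon entropy. -/
theorem mueller_pastena {d : ℕ} (p q : Fin d → ℝ)
    (hp : IsProbVec p) (hq : IsProbVec q)
    (hpp : ∀ i, 0 < p i) (hqp : ∀ i, 0 < q i)
    (hne : ¬ ∃ σ : Equiv.Perm (Fin d), p = q ∘ σ) :
    shEnt p < shEnt q ↔
      ∃ N : ℕ, 1 ≤ N ∧ ∃ (k : Fin N → ℕ) (r : (j : Fin N) → Fin (k j) → ℝ)
        (t : ((j : Fin N) → Fin (k j)) → ℝ)
        (B : Fin d × ((j : Fin N) → Fin (k j)) → Fin d × ((j : Fin N) → Fin (k j)) → ℝ),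
        (∀ j, IsProbVec (r j)) ∧ IsProbVec t ∧
        (∀ (j : Fin N) (a : Fin (k j)),
          ∑ f ∈ Finset.univ.filter (fun f : (j' : Fin N) → Fin (k j') => f j = a), t f
            = r j a) ∧
        (∀ u v, 0 ≤ B u v) ∧ (∀ u, ∑ v, B u v = 1) ∧ (∀ v, ∑ u, B u v = 1) ∧
        (∀ u, ∑ v, B u v * pvTensor p (fun f => ∏ j, r j (f j)) v = pvTensor q t u) := by
  constructor
  · intro h
    obtain ⟨m, c, s, hc, hs, hcs, hsc, hsq⟩ := exists_correlated_conversion hp hq hpp hqp h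
    obtain ⟨k, r, t, hr, ht, hm, B, hB, hBt⟩ := exists_marginal_catalysts hq hc hs hcs hsc hsq
    obtain ⟨hB0, hBr, hBc⟩ := mem_doublyStochastic_iff_sum.1 hB
    exact ⟨2, one_le_two, k, r, t, B, hr, ht, hm, hB0, hBr, hBc, congrFun hBt⟩
  · rintro ⟨N, -, k, r, t, B, hr, ht, hm, hB0, hBr, hBc, hBt⟩
    by_contra! hle
    have hw := isProbVec_prod hr
    set w : ((j : Fin N) → Fin (k j)) → ℝ := fun f => ∏ j, r j (f j)
    have hreach : BistochReach (pvTensor p w) (pvTensor q t) :=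
      ⟨B, mem_doublyStochastic_iff_sum.2 ⟨hB0, hBr, hBc⟩, funext hBt⟩
    have hpw : ∀ v, 0 ≤ pvTensor p w v := fun v => mul_nonneg (hp.1 _) (hw.1 _)
    have hH := hreach.shEnt_le hpw
    rw [shEnt_pvTensor hp.2 hw.2, shEnt_pvTensor hq.2 ht.2] at hH
    have hcross : -∑ f, t f * Real.log (w f) = shEnt w := by
      rw [shEnt, sum_mul_log_prod_marginal ht.1 hm,
        ← sum_mul_log_prod_marginal hw.1 (marginal_prod hr)]
    obtain rfl : t = w := eq_of_crossEntropy_le_shEnt ht hw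
      (eq_zero_of_prod_marginal_eq_zero ht.1 hm) (by linarith)
    refine hne (exists_perm_of_sum_pow_eq fun n => ?_)
    have hpow := hreach.sum_pow_eq hpw
      (by rw [shEnt_pvTensor hp.2 hw.2, shEnt_pvTensor hq.2 hw.2]; linarith) n
    simp only [pvTensor, mul_pow, Fintype.sum_prod_type, ← mul_sum, ← sum_mul] at hpow
    refine mul_right_cancel₀ (fun h0 => ?_) hpow
    have hzero : ∀ f, w f = 0 := fun f => eq_zero_of_pow_eq_zero
      ((sum_eq_zero_iff_of_nonneg fun f _ => pow_nonneg (hw.1 f) n).1 h0 f (mem_univ f))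
    simpa [hzero] using hw.2
end
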